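/- arXiv:math/0406114 — 2 statements merged into one kernel-verified Lean document; each statement's English description precedes it below -/
import Mathlib

section
/- Finiteness of the Hausdorff measure: Let (Λ,f) be a strongly mixing C¹ conformal repeller with scale constants δ_f, λ₀, λ₁ as in (C2') and (C3') and distortion modulus ε, and let s_crit be the unique zero of the pressure. If ∫₀^{λ₀δ_f} ε(t)/t dt < ∞, then the s_crit-dimensional Hausdorff measure of Λ is finite and positive: 0 < H^{s_crit}(Λ) < ∞. -/
open Filter Topology Metric Set MeasureTheory
open scoped Classical ENNReal

noncomputable section

/-- `Df` is the conformal derivative of `f`. -/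
def IsConfDeriv {Λ : Type*} [MetricSpace Λ] (f : Λ → Λ) (Df : Λ → ℝ) : Prop :=
  ∀ x : Λ, Filter.Tendsto (fun p : Λ × Λ => dist (f p.1) (f p.2) / dist p.1 p.2)
    ((𝓝 x ×ˢ 𝓝 x) ⊓ 𝓟 {p : Λ × Λ | p.1 ≠ p.2}) (𝓝 (Df x))

/-- `Df^{(n)}_x`, the conformal derivative along the orbit. -/
def orbDeriv {Λ : Type*} [MetricSpace Λ] (f : Λ → Λ) (Df : Λ → ℝ) (n : ℕ) (x : Λ) : ℝ :=
  ∏ k ∈ Finset.range n, Df (f^[k] x)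

/-- (C2): uniform expansion. -/
def UnifExpanding {Λ : Type*} [MetricSpace Λ] (f : Λ → Λ) (Df : Λ → ℝ) : Prop :=
  ∃ C : ℝ, 0 < C ∧ ∃ β : ℝ, 1 < β ∧ ∀ (x : Λ) (n : ℕ), C * β ^ n ≤ orbDeriv f Df n x

/-- divided difference `f[u,v]`, equal to `Df u` on the diagonal. -/
def divDiff {Λ : Type*} [MetricSpace Λ] (f : Λ → Λ) (Df : Λ → ℝ) (u v : Λ) : ℝ :=
  if u = v then Df u else dist (f u) (f v) / dist u v

/-- the distortion modulus `ε(r)`. -/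
def distMod {Λ : Type*} [MetricSpace Λ] (f : Λ → Λ) (Df : Λ → ℝ) (δf r : ℝ) : ℝ :=
  sSup {t : ℝ | ∃ x u₁ u₂ u₃ u₄ : Λ,
    u₁ ∈ ball x δf ∩ f ⁻¹' ball (f x) r ∧
    u₂ ∈ ball x δf ∩ f ⁻¹' ball (f x) r ∧
    u₃ ∈ ball x δf ∩ f ⁻¹' ball (f x) r ∧
    u₄ ∈ ball x δf ∩ f ⁻¹' ball (f x) r ∧
    t = |Real.log (divDiff f Df u₁ u₂ / divDiff f Df u₃ u₄)|}

/-- `M_n(s) = sup_y (L_sⁿ 1)(y)`. -/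
def Mn {Λ : Type*} [MetricSpace Λ] (f : Λ → Λ) (Df : Λ → ℝ) (s : ℝ) (n : ℕ) : ℝ :=
  ⨆ y : Λ, ∑' x : ↥(f^[n] ⁻¹' {y}), orbDeriv f Df n (x : Λ) ^ (-s)

/-- `m_n(s) = inf_y (L_sⁿ 1)(y)`. -/
def mn {Λ : Type*} [MetricSpace Λ] (f : Λ → Λ) (Df : Λ → ℝ) (s : ℝ) (n : ℕ) : ℝ :=
  ⨅ y : Λ, ∑' x : ↥(f^[n] ⁻¹' {y}), orbDeriv f Df n (x : Λ) ^ (-s)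

/-! The Dini condition makes `∑ k, ε (δ / (2 λ₀ ^ k))` converge, so the distortion of all iterates
of `f` along orbits that stay `δ / 2`-close is bounded by a single constant `C`. Hence the
transfer sums `(L_s ^ n 1) (y)` at nearby `y` are comparable uniformly in `n`, and mixing extends
this to all `y`. Since `inf_y (L_s ^ n 1) (y)` is supermultiplicative in `n` and
`sup_y (L_s ^ n 1) (y)` submultiplicative, zero pressure forces the infimum to be at most `1` and
the supremum at least `1`; so at `s = s_crit` the transfer sums are bounded above and below.

The Bowen balls of length `n` around the preimages under `f^[n]` of a finite net cover `Λ`, and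
their diameters are comparable to `1 / orbDeriv n`, so the sum of the `s`-th powers of the
diameters is at most a constant times the transfer sum: this gives the upper bound. For the lower
bound, the weighted fibres of `f^[n]` are measures of mass bounded below, and a ball of radius `ρ`
lies in a Bowen ball of derivative comparable to `1 / ρ`, so its mass is at most a constant times
`ρ ^ s` once `n` is large; the mass distribution principle applies. -/

section Preliminaries

theorem tsum_preimage_eq_tsum_fiber {α β : Type*} (g : α → β) (S : Set β) (w : α → ℝ≥0∞) :
    ∑' x : ↥(g ⁻¹' S), w x = ∑' y : S, ∑' x : ↥(g ⁻¹' {(y : β)}), w x := by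
  rw [← biUnion_preimage_singleton g S]
  exact ENNReal.tsum_biUnion' (pairwiseDisjoint_fiber g S)

theorem tsum_subtype_le_mul_tsum_of_injOn {α β : Type*} {g : α → β} {S : Set α} {T : Set β}
    {w : α → ℝ≥0∞} {w' : β → ℝ≥0∞} {c : ℝ≥0∞} (hmaps : MapsTo g S T) (hinj : InjOn g S)
    (hw : ∀ x ∈ S, w x ≤ c * w' (g x)) :
    ∑' x : S, w x ≤ c * ∑' y : T, w' y :=
  calc ∑' x : S, w x ≤ ∑' x : S, c * w' (hmaps.restrict g S T x) :=
        ENNReal.tsum_le_tsum fun x => hw x x.2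
    _ = c * ∑' x : S, w' (hmaps.restrict g S T x) := ENNReal.tsum_mul_left
    _ ≤ c * ∑' y : T, w' y := by
        gcongr
        exact ENNReal.tsum_comp_le_tsum_of_injective ((hmaps.restrict_inj).2 hinj) fun y : T => w' y

theorem ofReal_rpow_neg_le_mul {p q c s : ℝ} (hs : 0 ≤ s) (hp : 0 < p) (hc : 0 < c)
    (h : p ≤ c * q) :
    ENNReal.ofReal (q ^ (-s)) ≤ ENNReal.ofReal (c ^ s) * ENNReal.ofReal (p ^ (-s)) := by
  rw [← ENNReal.ofReal_mul (by positivity)]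
  refine ENNReal.ofReal_le_ofReal ?_
  calc q ^ (-s) ≤ (p / c) ^ (-s) :=
        Real.rpow_le_rpow_of_nonpos (by positivity) ((div_le_iff₀' hc).2 h) (by linarith)
    _ = c ^ s * p ^ (-s) := by
        rw [Real.div_rpow hp.le hc.le, Real.rpow_neg hc.le, div_inv_eq_mul, mul_comm]

theorem finite_preimage_iterate {α : Type*} {f : α → α} (hfib : ∀ y, (f ⁻¹' {y}).Finite) (n : ℕ)
    (y : α) : (f^[n] ⁻¹' {y}).Finite := by
  induction n with
  | zero => exact finite_singleton y
  | succ n ih =>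
    rw [Function.iterate_succ, preimage_comp]
    exact ih.preimage' fun z _ => hfib z

theorem mul_le_setIntegral_div {ε : ℝ → ℝ} {p q : ℝ} (hp : 0 < p) (hpq : p ≤ q)
    (hε : 0 ≤ ε p) (hmono : MonotoneOn ε (Icc p q))
    (hint : IntegrableOn (fun t => ε t / t) (Ioc p q)) :
    (1 - p / q) * ε p ≤ ∫ t in Ioc p q, ε t / t := by
  have hq : 0 < q := hp.trans_le hpq
  calc (1 - p / q) * ε p = ∫ _ in Ioc p q, ε p / q := by
        rw [setIntegral_const, smul_eq_mul, Real.volume_real_Ioc_of_le hpq]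
        field_simp
    _ ≤ ∫ t in Ioc p q, ε t / t := by
        refine setIntegral_mono_on (by simp [integrableOn_const_iff]) hint measurableSet_Ioc
          fun t ht => ?_
        have hpt : ε p ≤ ε t := hmono (left_mem_Icc.2 hpq) (Ioc_subset_Icc_self ht) ht.1.le
        exact div_le_div₀ (hε.trans hpt) hpt (hp.trans ht.1) ht.2

theorem summable_geometric_of_integrableOn_div {ε : ℝ → ℝ} {r a : ℝ} (ha : 1 < a) (hr : 0 < r)
    (hε : ∀ t ∈ Ioc 0 r, 0 ≤ ε t) (hmono : MonotoneOn ε (Ioc 0 r))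
    (hint : IntegrableOn (fun t => ε t / t) (Ioc 0 r)) :
    Summable fun k : ℕ => ε (r / a ^ k) := by
  have : 0 < a := one_pos.trans ha
  have hanti : Antitone fun k : ℕ => r / a ^ k := fun j k hjk =>
    div_le_div_of_nonneg_left hr.le (by positivity) (pow_le_pow_right₀ ha.le hjk)
  have hpos (k : ℕ) : 0 < r / a ^ k := by positivity
  have hle (k : ℕ) : r / a ^ k ≤ r := by simpa using hanti (Nat.zero_le k)
  have hsub (k : ℕ) : Ioc (r / a ^ (k + 1)) (r / a ^ k) ⊆ Ioc 0 r :=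
    Ioc_subset_Ioc (hpos _).le (hle k)
  have hpieces : Summable fun k : ℕ => ∫ t in Ioc (r / a ^ (k + 1)) (r / a ^ k), ε t / t :=
    (hasSum_integral_iUnion (fun _ => measurableSet_Ioc) hanti.pairwise_disjoint_on_Ioc_succ
      (hint.mono_set (iUnion_subset hsub))).summable
  have hc : 0 < 1 - a⁻¹ := sub_pos.2 (inv_lt_one_of_one_lt₀ ha)
  rw [← summable_nat_add_iff 1, ← summable_mul_left_iff hc.ne']
  refine hpieces.of_nonneg_of_le
    (fun k => mul_nonneg hc.le (hε _ ⟨hpos _, hle _⟩)) fun k => ?_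
  have hratio : a⁻¹ = r / a ^ (k + 1) / (r / a ^ k) := by
    rw [pow_succ]
    field_simp
  rw [hratio]
  exact mul_le_setIntegral_div (hpos _) (hanti k.le_succ) (hε _ ⟨hpos _, hle _⟩)
    (hmono.mono (Icc_subset_Ioc (hpos _) (hle k))) (hint.mono_set (hsub k))

theorem mul_le_log_of_tendsto_inv_mul_log {u : ℕ → ℝ} {L c : ℝ} {n : ℕ} (hn : n ≠ 0)
    (hu : Tendsto (fun m : ℕ => (m : ℝ)⁻¹ * Real.log (u m)) atTop (𝓝 L))
    (hpos : ∀ k, 0 < u (k * n)) (hle : ∀ k, u (k * n) ≤ c ^ k) : n * L ≤ Real.log c := by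
  have hn' : (0 : ℝ) < n := by positivity
  rw [← le_inv_mul_iff₀ hn']
  have hmul : Tendsto (fun k : ℕ => k * n) atTop atTop :=
    tendsto_id.atTop_mul_const' (Nat.pos_of_ne_zero hn)
  refine le_of_tendsto (hu.comp hmul) ?_
  filter_upwards [eventually_gt_atTop 0] with k hk
  have : (0 : ℝ) < k := by exact_mod_cast hk
  calc ((k * n : ℕ) : ℝ)⁻¹ * Real.log (u (k * n))
      ≤ ((k * n : ℕ) : ℝ)⁻¹ * Real.log (c ^ k) := by
        gcongr
        exacts [hpos k, hle k]
    _ = (n : ℝ)⁻¹ * Real.log c := by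
        rw [Real.log_pow]
        push_cast
        field_simp

theorem log_le_mul_of_tendsto_inv_mul_log {u : ℕ → ℝ} {L c : ℝ} {n : ℕ} (hn : n ≠ 0)
    (hu : Tendsto (fun m : ℕ => (m : ℝ)⁻¹ * Real.log (u m)) atTop (𝓝 L))
    (hc : 0 < c) (hle : ∀ k, c ^ k ≤ u (k * n)) : Real.log c ≤ n * L := by
  have hu_inv : Tendsto (fun m : ℕ => (m : ℝ)⁻¹ * Real.log (u m)⁻¹) atTop (𝓝 (-L)) := by
    simpa only [Real.log_inv, mul_neg] using hu.neg
  have hlog := mul_le_log_of_tendsto_inv_mul_log (c := c⁻¹) hn hu_inv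
    (fun k => inv_pos.2 ((pow_pos hc k).trans_le (hle k)))
    (fun k => by
      rw [inv_pow]
      exact inv_anti₀ (pow_pos hc k) (hle k))
  rw [Real.log_inv] at hlog
  linarith

end Preliminaries

section MassDistribution

variable {X : Type*} [MetricSpace X]

theorem exists_ofReal_rpow_le_add {d ε : ℝ≥0∞} {s r₀ : ℝ} (hs : 0 ≤ s)
    (hd : d < ENNReal.ofReal r₀) (hε : ε ≠ 0) :
    ∃ ρ ∈ Ioo 0 r₀, d < ENNReal.ofReal ρ ∧ ENNReal.ofReal ρ ^ s ≤ d ^ s + ε := by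
  have hlt : d ^ s < d ^ s + ε :=
    ENNReal.lt_add_right (ENNReal.rpow_ne_top_of_nonneg hs hd.ne_top) hε
  have hnear : ∀ᶠ a in 𝓝[>] d, a ^ s < d ^ s + ε :=
    nhdsWithin_le_nhds ((ENNReal.continuous_rpow_const.tendsto d).eventually_lt_const hlt)
  have : (𝓝[>] d).NeBot := nhdsGT_neBot_of_exists_gt ⟨_, hd⟩
  obtain ⟨a, has, hda, har⟩ := (hnear.and (Ioo_mem_nhdsGT hd)).exists
  have ha_top : a ≠ ⊤ := har.ne_top
  refine ⟨a.toReal, ⟨ENNReal.toReal_pos hda.ne_bot ha_top, ?_⟩, ?_, ?_⟩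
  · exact (ENNReal.lt_ofReal_iff_toReal_lt ha_top).1 har
  · rwa [ENNReal.ofReal_toReal ha_top]
  · rw [ENNReal.ofReal_toReal ha_top]
    exact has.le

theorem exists_finset_ball_cover_of_cover [CompactSpace X] {t : ℕ → Set X} {s r₀ : ℝ}
    {η : ℝ≥0∞} (hs : 0 ≤ s) (ht : univ ⊆ ⋃ i, t i)
    (hdiam : ∀ i, ediam (t i) < ENNReal.ofReal r₀) (hη : η ≠ 0) :
    ∃ (ι : Type) (J : Finset ι) (p : ι → X) (ρ : ι → ℝ), (∀ i, ρ i ∈ Ioo 0 r₀) ∧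
      univ ⊆ ⋃ i ∈ J, ball (p i) (ρ i) ∧
      ∑ i ∈ J, ENNReal.ofReal (ρ i) ^ s ≤
        ∑' i, (⨆ _ : (t i).Nonempty, ediam (t i) ^ s) + η := by
  obtain ⟨ε, hε₀, hε⟩ := ENNReal.exists_pos_sum_of_countable' hη ℕ
  choose ρ hρ hρ_diam hρ_rpow using
    fun i => exists_ofReal_rpow_le_add hs (hdiam i) (hε₀ i).ne'
  choose p hp using fun i : {i : ℕ // (t i).Nonempty} => i.2
  have hcover : univ ⊆ ⋃ i, ball (p i) (ρ i) := fun z hz => by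
    obtain ⟨i, hi⟩ := mem_iUnion.1 (ht hz)
    refine mem_iUnion.2 ⟨⟨i, ⟨z, hi⟩⟩, ?_⟩
    have hlt := (edist_le_ediam_of_mem hi (hp ⟨i, ⟨z, hi⟩⟩)).trans_lt (hρ_diam i)
    rw [edist_dist] at hlt
    exact (ENNReal.ofReal_lt_ofReal_iff (hρ i).1).1 hlt
  obtain ⟨J, hJ⟩ := isCompact_univ.elim_finite_subcover _ (fun _ => isOpen_ball) hcover
  refine ⟨_, J, p, fun i => ρ i, fun i => hρ i, hJ, ?_⟩
  let g : ℕ → ℝ≥0∞ := fun i => (⨆ _ : (t i).Nonempty, ediam (t i) ^ s) + ε i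
  calc ∑ i ∈ J, ENNReal.ofReal (ρ i) ^ s
      ≤ ∑ i ∈ J, g i := Finset.sum_le_sum fun i _ => (hρ_rpow i).trans
        (add_le_add (le_iSup (fun _ : (t i).Nonempty => ediam (t i) ^ s) i.2) le_rfl)
    _ ≤ ∑' i : {i : ℕ // (t i).Nonempty}, g i := ENNReal.sum_le_tsum J
    _ ≤ ∑' i, g i := ENNReal.tsum_comp_le_tsum_of_injective Subtype.val_injective g
    _ = ∑' i, (⨆ _ : (t i).Nonempty, ediam (t i) ^ s) + ∑' i, ε i := ENNReal.tsum_add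
    _ ≤ ∑' i, (⨆ _ : (t i).Nonempty, ediam (t i) ^ s) + η := by gcongr

/- No limit measure is needed: compactness reduces a cover to finitely many balls, and a single
`ν n` far along the filter sees the bound on all of them. -/
theorem div_le_hausdorffMeasure_of_eventually_measure_ball_le [CompactSpace X]
    [MeasurableSpace X] [BorelSpace X] {ι : Type*} {l : Filter ι} [l.NeBot] {ν : ι → Measure X}
    {s r₀ : ℝ} {c C : ℝ≥0∞} (hs : 0 ≤ s) (hr₀ : 0 < r₀) (hmass : ∀ᶠ n in l, c ≤ ν n univ)
    (hball : ∀ x, ∀ ρ ∈ Ioo 0 r₀, ∀ᶠ n in l, ν n (ball x ρ) ≤ C * ENNReal.ofReal ρ ^ s) :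
    c / C ≤ μH[s] (univ : Set X) := by
  rw [Measure.hausdorffMeasure_apply]
  refine le_iSup₂_of_le (ENNReal.ofReal (r₀ / 2)) (by simpa using hr₀) ?_
  refine le_iInf fun t => le_iInf fun ht => le_iInf fun hdiam => ?_
  refine ENNReal.le_of_forall_pos_le_add fun η hη _ => ENNReal.div_le_of_le_mul' ?_
  have hdiam' (i : ℕ) : ediam (t i) < ENNReal.ofReal r₀ :=
    (hdiam i).trans_lt ((ENNReal.ofReal_lt_ofReal_iff hr₀).2 (half_lt_self hr₀))
  obtain ⟨κ, J, p, ρ, hρ, hJ, hsum⟩ :=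
    exists_finset_ball_cover_of_cover hs ht hdiam' (ENNReal.coe_ne_zero.2 hη.ne')
  obtain ⟨n, hcn, hn⟩ := (hmass.and
    ((Finset.eventually_all J).2 fun i _ => hball (p i) (ρ i) (hρ i))).exists
  calc c ≤ ν n univ := hcn
    _ ≤ ν n (⋃ i ∈ J, ball (p i) (ρ i)) := measure_mono hJ
    _ ≤ ∑ i ∈ J, ν n (ball (p i) (ρ i)) := measure_biUnion_finset_le J _
    _ ≤ ∑ i ∈ J, C * ENNReal.ofReal (ρ i) ^ s := Finset.sum_le_sum hn
    _ = C * ∑ i ∈ J, ENNReal.ofReal (ρ i) ^ s := (Finset.mul_sum ..).symm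
    _ ≤ C * (∑' i, (⨆ _ : (t i).Nonempty, ediam (t i) ^ s) + η) := by gcongr

end MassDistribution

section BowenBall

variable {Λ : Type*} [MetricSpace Λ] {f : Λ → Λ} {r : ℝ} {n : ℕ} {x u : Λ}

/-- The Bowen ball: the points whose orbit stays within `r` of the orbit of `x` at all times
`0, …, n`, the final time `n` included. For an expanding map at a small scale `r` it is the image
of `ball (f^[n] x) r` under the inverse branch of `f^[n]` that sends `f^[n] x` to `x`. -/
def bowenBall (f : Λ → Λ) (r : ℝ) (n : ℕ) (x : Λ) : Set Λ :=
  {u | ∀ k ≤ n, dist (f^[k] u) (f^[k] x) < r}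

theorem bowenBall_zero : bowenBall f r 0 x = ball x r := by
  simp [bowenBall, ball]

theorem mem_bowenBall_succ :
    u ∈ bowenBall f r (n + 1) x ↔ dist u x < r ∧ f u ∈ bowenBall f r n (f x) := by
  refine ⟨fun h => ⟨h 0 (by lia), fun k hk => h (k + 1) (by lia)⟩, fun h k hk => ?_⟩
  cases k with
  | zero => exact h.1
  | succ k => exact h.2 k (by lia)

theorem mem_bowenBall_succ' :
    u ∈ bowenBall f r (n + 1) x ↔
      u ∈ bowenBall f r n x ∧ dist (f^[n + 1] u) (f^[n + 1] x) < r := by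
  refine ⟨fun h => ⟨fun k hk => h k (by lia), h _ le_rfl⟩, fun h k hk => ?_⟩
  rcases Nat.le_succ_iff.1 hk with hk | rfl
  exacts [h.1 k hk, h.2]

theorem mem_bowenBall_self (hr : 0 < r) : x ∈ bowenBall f r n x := fun k _ => by
  simpa only [dist_self] using hr

theorem mem_bowenBall_comm : u ∈ bowenBall f r n x ↔ x ∈ bowenBall f r n u := by
  simp only [bowenBall, mem_ofPred_eq, dist_comm]

end BowenBall

section OrbitDerivative

variable {Λ : Type*} [MetricSpace Λ] {f : Λ → Λ} {Df : Λ → ℝ} {a b : ℝ}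

theorem orbDeriv_zero (x : Λ) : orbDeriv f Df 0 x = 1 := by
  simp [orbDeriv]

theorem orbDeriv_succ (n : ℕ) (x : Λ) :
    orbDeriv f Df (n + 1) x = orbDeriv f Df n x * Df (f^[n] x) :=
  Finset.prod_range_succ ..

theorem orbDeriv_add (m n : ℕ) (x : Λ) :
    orbDeriv f Df (m + n) x = orbDeriv f Df m x * orbDeriv f Df n (f^[m] x) := by
  simp only [orbDeriv, Finset.prod_range_add, ← Function.iterate_add_apply, add_comm]

theorem orbDeriv_pos (hDf : ∀ x, 0 < Df x) (n : ℕ) (x : Λ) : 0 < orbDeriv f Df n x :=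
  Finset.prod_pos fun _ _ => hDf _

theorem pow_le_orbDeriv (ha : 0 ≤ a) (hDf : ∀ x, a ≤ Df x) (n : ℕ) (x : Λ) :
    a ^ n ≤ orbDeriv f Df n x := by
  simpa [orbDeriv] using
    Finset.prod_le_prod (s := Finset.range n) (fun _ _ => ha) fun k _ => hDf (f^[k] x)

theorem orbDeriv_le_pow (hpos : ∀ x, 0 < Df x) (hDf : ∀ x, Df x ≤ b) (n : ℕ) (x : Λ) :
    orbDeriv f Df n x ≤ b ^ n := by
  simpa [orbDeriv] using
    Finset.prod_le_prod (s := Finset.range n) (fun k _ => (hpos (f^[k] x)).le) fun _ _ => hDf _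

theorem monotone_orbDeriv (hDf : ∀ x, 1 ≤ Df x) (x : Λ) :
    Monotone fun n => orbDeriv f Df n x :=
  monotone_nat_of_le_succ fun n => by
    rw [orbDeriv_succ]
    exact le_mul_of_one_le_right
      (orbDeriv_pos (fun y => one_pos.trans_le (hDf y)) n x).le (hDf _)

theorem exists_orbDeriv_le_lt_mul (ha : 1 < a) (hDf : ∀ x, a ≤ Df x) (hDf' : ∀ x, Df x ≤ b)
    {t : ℝ} (ht : 1 ≤ t) (x : Λ) :
    ∃ k, orbDeriv f Df k x ≤ t ∧ t < b * orbDeriv f Df k x := by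
  have ha₀ : 0 < a := one_pos.trans ha
  have hex : ∃ k, t < orbDeriv f Df (k + 1) x := by
    obtain ⟨k, hk⟩ := pow_unbounded_of_one_lt t ha
    exact ⟨k, hk.trans_le ((pow_le_pow_right₀ ha.le k.le_succ).trans
      (pow_le_orbDeriv ha₀.le hDf _ x))⟩
  refine ⟨Nat.find hex, ?_, ?_⟩
  · rcases h : Nat.find hex with _ | k
    · rwa [orbDeriv_zero]
    · exact not_lt.1 (Nat.find_min hex (h ▸ k.lt_succ_self))
  · refine (Nat.find_spec hex).trans_le ?_
    rw [orbDeriv_succ, mul_comm]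
    have := orbDeriv_pos (f := f) (fun y => ha₀.trans_le (hDf y)) (Nat.find hex) x
    gcongr
    exact hDf' _

end OrbitDerivative

section Distortion

variable {Λ : Type*} [MetricSpace Λ] {f : Λ → Λ} {Df : Λ → ℝ} {δ a b r C : ℝ} {n : ℕ}
  {x u v w z : Λ}

/-- The divided difference of `f^[n]` along the orbits of `u` and `v`; the factors with
`f^[k] u = f^[k] v` are values of `Df`, so that the diagonal gives `orbDeriv`. -/
def orbDivDiff (f : Λ → Λ) (Df : Λ → ℝ) (n : ℕ) (u v : Λ) : ℝ :=
  ∏ k ∈ Finset.range n, divDiff f Df (f^[k] u) (f^[k] v)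

/-- Bounded distortion with constant `C`: on every Bowen ball of radius `r` and every length `n`,
the divided differences of `f^[n]` are comparable up to the factor `C`. -/
def BoundedDistortion (f : Λ → Λ) (Df : Λ → ℝ) (r C : ℝ) : Prop :=
  ∀ ⦃n : ℕ⦄ ⦃x u v w z : Λ⦄, u ∈ bowenBall f r n x → v ∈ bowenBall f r n x →
    w ∈ bowenBall f r n x → z ∈ bowenBall f r n x →
    orbDivDiff f Df n u v ≤ C * orbDivDiff f Df n w z

theorem divDiff_self (u : Λ) : divDiff f Df u u = Df u := if_pos rfl

theorem divDiff_mul_dist (u v : Λ) : divDiff f Df u v * dist u v = dist (f u) (f v) := by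
  rcases eq_or_ne u v with rfl | huv
  · simp
  · rw [divDiff, if_neg huv, div_mul_cancel₀ _ (dist_ne_zero.2 huv)]

theorem orbDivDiff_succ (n : ℕ) (u v : Λ) :
    orbDivDiff f Df (n + 1) u v = divDiff f Df u v * orbDivDiff f Df n (f u) (f v) := by
  rw [orbDivDiff, Finset.prod_range_succ', mul_comm]
  rfl

theorem orbDivDiff_self (n : ℕ) (u : Λ) : orbDivDiff f Df n u u = orbDeriv f Df n u := by
  simp only [orbDivDiff, orbDeriv, divDiff_self]

theorem orbDivDiff_mul_dist (n : ℕ) (u v : Λ) :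
    orbDivDiff f Df n u v * dist u v = dist (f^[n] u) (f^[n] v) := by
  induction n generalizing u v with
  | zero => simp [orbDivDiff]
  | succ n ih =>
    rw [orbDivDiff_succ, mul_right_comm, divDiff_mul_dist, mul_comm, ih]
    rfl

theorem orbDivDiff_nonneg (hDf : ∀ x, 0 < Df x) (n : ℕ) (u v : Λ) :
    0 ≤ orbDivDiff f Df n u v := by
  refine Finset.prod_nonneg fun k _ => ?_
  rw [divDiff]
  split_ifs
  exacts [(hDf _).le, by positivity]

namespace BoundedDistortion

theorem one_le (h : BoundedDistortion f Df r C) (hr : 0 < r) (x : Λ) : 1 ≤ C := by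
  have hx : x ∈ bowenBall f r 0 x := mem_bowenBall_self hr
  simpa [orbDivDiff] using h hx hx hx hx

theorem dist_iterate_le (h : BoundedDistortion f Df r C) (hr : 0 < r)
    (hu : u ∈ bowenBall f r n x) (hv : v ∈ bowenBall f r n x) :
    dist (f^[n] u) (f^[n] v) ≤ C * orbDeriv f Df n x * dist u v := by
  have hx : x ∈ bowenBall f r n x := mem_bowenBall_self hr
  rw [← orbDivDiff_mul_dist (Df := Df), ← orbDivDiff_self]
  gcongr
  exact h hu hv hx hx

theorem orbDeriv_mul_dist_le (h : BoundedDistortion f Df r C) (hr : 0 < r)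
    (hu : u ∈ bowenBall f r n x) (hv : v ∈ bowenBall f r n x) :
    orbDeriv f Df n x * dist u v ≤ C * dist (f^[n] u) (f^[n] v) := by
  have hx : x ∈ bowenBall f r n x := mem_bowenBall_self hr
  rw [← orbDivDiff_mul_dist (Df := Df), ← orbDivDiff_self, ← mul_assoc]
  gcongr
  exact h hx hx hu hv

theorem orbDeriv_le (h : BoundedDistortion f Df r C) (hr : 0 < r)
    (hu : u ∈ bowenBall f r n x) : orbDeriv f Df n x ≤ C * orbDeriv f Df n u := by
  have hx : x ∈ bowenBall f r n x := mem_bowenBall_self hr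
  simpa only [orbDivDiff_self] using h hx hx hu hu

theorem injOn_iterate (h : BoundedDistortion f Df r C) (hr : 0 < r) (hDf : ∀ x, 0 < Df x)
    (n : ℕ) (x : Λ) : InjOn f^[n] (bowenBall f r n x) := fun u hu v hv huv => by
  have hle := h.orbDeriv_mul_dist_le hr hu hv
  rw [huv, dist_self, mul_zero] at hle
  exact dist_le_zero.1 (nonpos_of_mul_nonpos_right hle (orbDeriv_pos hDf n x))

theorem ediam_bowenBall_le (h : BoundedDistortion f Df r C) (hr : 0 < r) (hDf : ∀ x, 0 < Df x)
    (n : ℕ) (x : Λ) :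
    ediam (bowenBall f r n x) ≤ ENNReal.ofReal (2 * r * C / orbDeriv f Df n x) := by
  have hC : 1 ≤ C := h.one_le hr x
  refine ediam_le fun u hu v hv => ?_
  rw [edist_dist]
  refine ENNReal.ofReal_le_ofReal ((le_div_iff₀' (orbDeriv_pos hDf n x)).2 ?_)
  calc orbDeriv f Df n x * dist u v ≤ C * dist (f^[n] u) (f^[n] v) :=
        h.orbDeriv_mul_dist_le hr hu hv
    _ ≤ C * (2 * r) := by
        gcongr
        linarith [dist_triangle_right (f^[n] u) (f^[n] v) (f^[n] x), hu n le_rfl, hv n le_rfl]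
    _ = 2 * r * C := mul_comm _ _

end BoundedDistortion

/-- The expansion bounds (C2') and the covering property (C3') at scale `δ`, with the bounds of
(C2') imposed on the conformal derivative too. (C2') is stated without division, which lets
`u = v`. -/
structure ExpandingAtScale (f : Λ → Λ) (Df : Λ → ℝ) (δ a b : ℝ) : Prop where
  one_lt : 1 < a
  scale_pos : 0 < δ
  mul_dist_le : ∀ ⦃u v : Λ⦄, dist u v < δ → a * dist u v ≤ dist (f u) (f v)
  dist_le_mul : ∀ ⦃u v : Λ⦄, dist u v < δ → dist (f u) (f v) ≤ b * dist u v
  le_deriv : ∀ x, a ≤ Df x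
  deriv_le : ∀ x, Df x ≤ b
  ball_subset_image : ∀ x, ball (f x) δ ⊆ f '' ball x δ

theorem IsConfDeriv.le_of_ratio_le (h : IsConfDeriv f Df) (x : Λ) [(𝓝[≠] x).NeBot] (hδ : 0 < δ)
    (hle : ∀ v, v ≠ x → dist v x < δ → dist (f v) (f x) / dist v x ≤ b) : Df x ≤ b := by
  have hlim : Tendsto (fun v : Λ => (v, x)) (𝓝[≠] x)
      ((𝓝 x ×ˢ 𝓝 x) ⊓ 𝓟 {p : Λ × Λ | p.1 ≠ p.2}) :=
    tendsto_inf.2 ⟨(tendsto_id.mono_left nhdsWithin_le_nhds).prodMk tendsto_const_nhds,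
      tendsto_principal.2 self_mem_nhdsWithin⟩
  refine le_of_tendsto ((h x).comp hlim) ?_
  filter_upwards [nhdsWithin_le_nhds (ball_mem_nhds x hδ), self_mem_nhdsWithin] with v hv hne
  exact hle v hne hv

theorem IsConfDeriv.expandingAtScale (h : IsConfDeriv f Df) (hpt : ∀ x : Λ, (𝓝[≠] x).NeBot)
    (ha : 1 < a) (hδ : 0 < δ) (hDf : ∀ x, a ≤ Df x)
    (hratio : ∀ u v : Λ, u ≠ v → dist u v < δ →
      a ≤ dist (f u) (f v) / dist u v ∧ dist (f u) (f v) / dist u v ≤ b)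
    (hball : ∀ x, ball (f x) δ ⊆ f '' ball x δ) : ExpandingAtScale f Df δ a b where
  one_lt := ha
  scale_pos := hδ
  mul_dist_le u v huv := by
    rcases eq_or_ne u v with rfl | hne
    · simp
    · exact (le_div_iff₀ (dist_pos.2 hne)).1 (hratio u v hne huv).1
  dist_le_mul u v huv := by
    rcases eq_or_ne u v with rfl | hne
    · simp
    · exact (div_le_iff₀ (dist_pos.2 hne)).1 (hratio u v hne huv).2
  le_deriv := hDf
  deriv_le x := h.le_of_ratio_le x hδ fun v hne hv => (hratio v x hne hv).2
  ball_subset_image := hball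

/-- The set of log-ratios of divided differences whose supremum is `distMod`. -/
def logDistortions (f : Λ → Λ) (Df : Λ → ℝ) (δ r : ℝ) : Set ℝ :=
  {t : ℝ | ∃ x u₁ u₂ u₃ u₄ : Λ,
    u₁ ∈ ball x δ ∩ f ⁻¹' ball (f x) r ∧
    u₂ ∈ ball x δ ∩ f ⁻¹' ball (f x) r ∧
    u₃ ∈ ball x δ ∩ f ⁻¹' ball (f x) r ∧
    u₄ ∈ ball x δ ∩ f ⁻¹' ball (f x) r ∧
    t = |Real.log (divDiff f Df u₁ u₂ / divDiff f Df u₃ u₄)|}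

theorem distMod_nonneg (r : ℝ) : 0 ≤ distMod f Df δ r := by
  refine Real.sSup_nonneg ?_
  rintro t ⟨x, u₁, u₂, u₃, u₄, -, -, -, -, rfl⟩
  exact abs_nonneg _

theorem logDistortions_mono (f : Λ → Λ) (Df : Λ → ℝ) (δ : ℝ) :
    Monotone (logDistortions f Df δ) := fun r r' hr => by
  have hsub (x : Λ) : ball x δ ∩ f ⁻¹' ball (f x) r ⊆ ball x δ ∩ f ⁻¹' ball (f x) r' :=
    inter_subset_inter_right _ (preimage_mono (ball_subset_ball hr))
  rintro t ⟨x, u₁, u₂, u₃, u₄, h₁, h₂, h₃, h₄, rfl⟩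
  exact ⟨x, u₁, u₂, u₃, u₄, hsub x h₁, hsub x h₂, hsub x h₃, hsub x h₄, rfl⟩

theorem logDistortions_nonempty [Nonempty Λ] (hδ : 0 < δ) (hr : 0 < r) :
    (logDistortions f Df δ r).Nonempty := by
  obtain ⟨x⟩ := ‹Nonempty Λ›
  have hx : x ∈ ball x δ ∩ f ⁻¹' ball (f x) r := ⟨mem_ball_self hδ, mem_ball_self hr⟩
  exact ⟨_, x, x, x, x, x, hx, hx, hx, hx, rfl⟩

namespace ExpandingAtScale

theorem deriv_pos (hf : ExpandingAtScale f Df δ a b) (x : Λ) : 0 < Df x :=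
  (one_pos.trans hf.one_lt).trans_le (hf.le_deriv x)

theorem one_lt_upper (hf : ExpandingAtScale f Df δ a b) (x : Λ) : 1 < b :=
  hf.one_lt.trans_le ((hf.le_deriv x).trans (hf.deriv_le x))

theorem divDiff_mem_Icc (hf : ExpandingAtScale f Df δ a b) (huv : dist u v < δ) :
    divDiff f Df u v ∈ Icc a b := by
  rcases eq_or_ne u v with rfl | hne
  · rw [divDiff_self]
    exact ⟨hf.le_deriv u, hf.deriv_le u⟩
  · rw [divDiff, if_neg hne, mem_Icc, le_div_iff₀ (dist_pos.2 hne), div_le_iff₀ (dist_pos.2 hne)]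
    exact ⟨hf.mul_dist_le huv, hf.dist_le_mul huv⟩

theorem dist_lt_div (hf : ExpandingAtScale f Df δ a b) (hux : dist u x < δ)
    (hr : dist (f u) (f x) < r) : dist u x < r / a :=
  (lt_div_iff₀' (one_pos.trans hf.one_lt)).2 ((hf.mul_dist_le hux).trans_lt hr)

theorem dist_lt_of_map_mem_ball (hf : ExpandingAtScale f Df δ a b) (hr : r ≤ δ / 2)
    (hu : u ∈ ball x δ ∩ f ⁻¹' ball (f x) r) (hv : v ∈ ball x δ ∩ f ⁻¹' ball (f x) r) :
    dist u v < δ := by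
  have hhalf : ∀ y ∈ ball x δ ∩ f ⁻¹' ball (f x) r, dist y x < δ / 2 := fun y hy =>
    (hf.dist_lt_div hy.1 (lt_of_lt_of_le hy.2 hr)).trans
      (div_lt_self (half_pos hf.scale_pos) hf.one_lt)
  linarith [dist_triangle_right u v x, hhalf u hu, hhalf v hv]

theorem abs_log_divDiff_div_le (hf : ExpandingAtScale f Df δ a b) (huv : dist u v < δ)
    (hwz : dist w z < δ) :
    |Real.log (divDiff f Df u v / divDiff f Df w z)| ≤ Real.log b - Real.log a := by
  have ha : 0 < a := one_pos.trans hf.one_lt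
  have hlog : ∀ t ∈ Icc a b, Real.log t ∈ Icc (Real.log a) (Real.log b) := fun t ht =>
    ⟨Real.log_le_log ha ht.1, Real.log_le_log (ha.trans_le ht.1) ht.2⟩
  have huv' := hf.divDiff_mem_Icc huv
  have hwz' := hf.divDiff_mem_Icc hwz
  rw [Real.log_div (ha.trans_le huv'.1).ne' (ha.trans_le hwz'.1).ne']
  exact abs_sub_le_of_le_of_le (hlog _ huv').1 (hlog _ huv').2 (hlog _ hwz').1 (hlog _ hwz').2

theorem bddAbove_logDistortions (hf : ExpandingAtScale f Df δ a b) (hr : r ≤ δ / 2) :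
    BddAbove (logDistortions f Df δ r) := by
  refine ⟨Real.log b - Real.log a, ?_⟩
  rintro t ⟨x, u₁, u₂, u₃, u₄, h₁, h₂, h₃, h₄, rfl⟩
  exact hf.abs_log_divDiff_div_le (hf.dist_lt_of_map_mem_ball hr h₁ h₂)
    (hf.dist_lt_of_map_mem_ball hr h₃ h₄)

/- Beyond `δ / 2` the supremum defining `distMod` may be infinite, hence `0` in `ℝ`. -/
theorem monotoneOn_distMod [Nonempty Λ] (hf : ExpandingAtScale f Df δ a b) :
    MonotoneOn (distMod f Df δ) (Ioc 0 (δ / 2)) := fun _ hr _ hr' hle =>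
  csSup_le_csSup (hf.bddAbove_logDistortions hr'.2)
    (logDistortions_nonempty hf.scale_pos hr.1) (logDistortions_mono f Df δ hle)

theorem divDiff_le_exp_distMod_mul (hf : ExpandingAtScale f Df δ a b) (hr : r ≤ δ / 2)
    (hu : u ∈ ball x δ ∩ f ⁻¹' ball (f x) r) (hv : v ∈ ball x δ ∩ f ⁻¹' ball (f x) r)
    (hw : w ∈ ball x δ ∩ f ⁻¹' ball (f x) r) (hz : z ∈ ball x δ ∩ f ⁻¹' ball (f x) r) :
    divDiff f Df u v ≤ Real.exp (distMod f Df δ r) * divDiff f Df w z := by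
  have ha : 0 < a := one_pos.trans hf.one_lt
  have huv : 0 < divDiff f Df u v :=
    ha.trans_le (hf.divDiff_mem_Icc (hf.dist_lt_of_map_mem_ball hr hu hv)).1
  have hwz : 0 < divDiff f Df w z :=
    ha.trans_le (hf.divDiff_mem_Icc (hf.dist_lt_of_map_mem_ball hr hw hz)).1
  have hlog : |Real.log (divDiff f Df u v / divDiff f Df w z)| ≤ distMod f Df δ r :=
    le_csSup (hf.bddAbove_logDistortions hr) ⟨x, u, v, w, z, hu, hv, hw, hz, rfl⟩
  rw [← div_le_iff₀ hwz, ← Real.log_le_iff_le_exp (div_pos huv hwz)]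
  exact (le_abs_self _).trans hlog

theorem scale_div_pow_le (hf : ExpandingAtScale f Df δ a b) (n : ℕ) :
    δ / 2 / a ^ n ≤ δ / 2 :=
  div_le_self (half_pos hf.scale_pos).le (one_le_pow₀ hf.one_lt.le)

theorem dist_lt_of_mem_bowenBall (hf : ExpandingAtScale f Df δ a b)
    (hu : u ∈ bowenBall f (δ / 2) n x) : dist u x < δ / 2 / a ^ n := by
  induction n generalizing u x with
  | zero => simpa [bowenBall_zero] using hu
  | succ n ih =>
    obtain ⟨hux, hfu⟩ := mem_bowenBall_succ.1 hu
    rw [pow_succ, ← div_div]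
    exact hf.dist_lt_div (hux.trans (half_lt_self hf.scale_pos)) (ih hfu)

theorem exists_mem_bowenBall_iterate_eq (hf : ExpandingAtScale f Df δ a b) (n : ℕ) {x y : Λ}
    (hy : dist y (f^[n] x) < δ / 2) : ∃ u ∈ bowenBall f (δ / 2) n x, f^[n] u = y := by
  induction n generalizing x with
  | zero => exact ⟨y, by simpa [bowenBall_zero] using hy, rfl⟩
  | succ n ih =>
    obtain ⟨_, hz, hzy⟩ := ih hy
    have hzx := hz 0 n.zero_le
    obtain ⟨u, hu, rfl⟩ :=
      hf.ball_subset_image x (mem_ball.2 (hzx.trans (half_lt_self hf.scale_pos)))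
    refine ⟨u, mem_bowenBall_succ.2 ⟨?_, hz⟩, hzy⟩
    exact (hf.dist_lt_div hu hzx).trans (div_lt_self (half_pos hf.scale_pos) hf.one_lt)

theorem orbDivDiff_le_exp_sum_mul (hf : ExpandingAtScale f Df δ a b)
    (hu : u ∈ bowenBall f (δ / 2) n x) (hv : v ∈ bowenBall f (δ / 2) n x)
    (hw : w ∈ bowenBall f (δ / 2) n x) (hz : z ∈ bowenBall f (δ / 2) n x) :
    orbDivDiff f Df n u v ≤
      Real.exp (∑ k ∈ Finset.range n, distMod f Df δ (δ / 2 / a ^ k)) *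
        orbDivDiff f Df n w z := by
  induction n generalizing x u v w z with
  | zero => simp [orbDivDiff]
  | succ n ih =>
    rw [mem_bowenBall_succ] at hu hv hw hz
    have hstep : divDiff f Df u v ≤
        Real.exp (distMod f Df δ (δ / 2 / a ^ n)) * divDiff f Df w z := by
      have hnhd : ∀ y, dist y x < δ / 2 ∧ f y ∈ bowenBall f (δ / 2) n (f x) →
          y ∈ ball x δ ∩ f ⁻¹' ball (f x) (δ / 2 / a ^ n) := fun y hy =>
        ⟨hy.1.trans (half_lt_self hf.scale_pos), hf.dist_lt_of_mem_bowenBall hy.2⟩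
      exact hf.divDiff_le_exp_distMod_mul (hf.scale_div_pow_le n) (hnhd u hu) (hnhd v hv)
        (hnhd w hw) (hnhd z hz)
    have hnonneg := orbDivDiff_nonneg (f := f) hf.deriv_pos
    rw [orbDivDiff_succ, orbDivDiff_succ, Finset.sum_range_succ, add_comm, Real.exp_add,
      mul_mul_mul_comm]
    exact mul_le_mul hstep (ih hu.2 hv.2 hw.2 hz.2) (hnonneg ..)
      ((by simpa [orbDivDiff] using hnonneg 1 u v : 0 ≤ divDiff f Df u v).trans hstep)

theorem exists_boundedDistortion [Nonempty Λ] (hf : ExpandingAtScale f Df δ a b)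
    (hdini : IntegrableOn (fun t => distMod f Df δ t / t) (Ioc 0 (δ / 2))) :
    ∃ C, BoundedDistortion f Df (δ / 2) C := by
  have hsum : Summable fun k : ℕ => distMod f Df δ (δ / 2 / a ^ k) :=
    summable_geometric_of_integrableOn_div hf.one_lt (half_pos hf.scale_pos)
      (fun t _ => distMod_nonneg t) hf.monotoneOn_distMod hdini
  refine ⟨Real.exp (∑' k : ℕ, distMod f Df δ (δ / 2 / a ^ k)),
    fun n x u v w z hu hv hw hz => (hf.orbDivDiff_le_exp_sum_mul hu hv hw hz).trans ?_⟩
  gcongr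
  · exact orbDivDiff_nonneg hf.deriv_pos n w z
  · exact hsum.sum_le_tsum _ fun k _ => distMod_nonneg _

end ExpandingAtScale

end Distortion

section TransferSum

variable {Λ : Type*} [MetricSpace Λ] {f : Λ → Λ} {Df : Λ → ℝ} {s : ℝ}

/-- The weight `(orbDeriv n x) ^ (-s)` of `x` in the `n`-th power of the transfer operator. -/
def orbWeight (f : Λ → Λ) (Df : Λ → ℝ) (s : ℝ) (n : ℕ) (x : Λ) : ℝ≥0∞ :=
  ENNReal.ofReal (orbDeriv f Df n x ^ (-s))

/-- The value at `y` of the `n`-th power of the transfer operator applied to `1`, taken in `ℝ≥0∞`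
so that no summability has to be carried along. -/
def transferSum (f : Λ → Λ) (Df : Λ → ℝ) (s : ℝ) (n : ℕ) (y : Λ) : ℝ≥0∞ :=
  ∑' x : ↥(f^[n] ⁻¹' {y}), orbWeight f Df s n x

theorem orbWeight_add (hDf : ∀ x, 0 < Df x) (m n : ℕ) (x : Λ) :
    orbWeight f Df s (m + n) x = orbWeight f Df s m x * orbWeight f Df s n (f^[m] x) := by
  have hpos := orbDeriv_pos (f := f) hDf
  rw [orbWeight, orbDeriv_add, Real.mul_rpow (hpos m x).le (hpos n _).le,
    ENNReal.ofReal_mul (Real.rpow_nonneg (hpos m x).le _)]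
  rfl

theorem orbWeight_pos (hDf : ∀ x, 0 < Df x) (n : ℕ) (x : Λ) : 0 < orbWeight f Df s n x :=
  ENNReal.ofReal_pos.2 (Real.rpow_pos_of_pos (orbDeriv_pos hDf n x) _)

theorem transferSum_zero (y : Λ) : transferSum f Df s 0 y = 1 := by
  refine (tsum_singleton y (orbWeight f Df s 0)).trans ?_
  simp [orbWeight, orbDeriv_zero]

theorem tsum_orbWeight_eq_transferSum_mul (hDf : ∀ x, 0 < Df x) (m n : ℕ) (z : Λ) :
    ∑' x : ↥(f^[m] ⁻¹' {z}), orbWeight f Df s (m + n) x =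
      transferSum f Df s m z * orbWeight f Df s n z := by
  rw [transferSum, ← ENNReal.tsum_mul_right]
  refine tsum_congr fun x => ?_
  rw [orbWeight_add hDf, x.2]

theorem transferSum_add (hDf : ∀ x, 0 < Df x) (m n : ℕ) (y : Λ) :
    transferSum f Df s (m + n) y =
      ∑' z : ↥(f^[n] ⁻¹' {y}), transferSum f Df s m z * orbWeight f Df s n z := by
  rw [transferSum, add_comm, Function.iterate_add, preimage_comp, tsum_preimage_eq_tsum_fiber,
    add_comm]
  simp only [tsum_orbWeight_eq_transferSum_mul hDf]

theorem transferSum_mul_le_pow (hDf : ∀ x, 0 < Df x) {n : ℕ} {c : ℝ≥0∞}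
    (hc : ∀ y, transferSum f Df s n y ≤ c) (k : ℕ) (y : Λ) :
    transferSum f Df s (k * n) y ≤ c ^ k := by
  induction k generalizing y with
  | zero => simp [transferSum_zero]
  | succ k ih =>
    calc transferSum f Df s ((k + 1) * n) y
        = ∑' z : ↥(f^[n] ⁻¹' {y}), transferSum f Df s (k * n) z * orbWeight f Df s n z := by
          rw [add_one_mul, transferSum_add hDf]
      _ ≤ ∑' z : ↥(f^[n] ⁻¹' {y}), c ^ k * orbWeight f Df s n z := by
          gcongr
          exact ih _
      _ = c ^ k * transferSum f Df s n y := ENNReal.tsum_mul_left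
      _ ≤ c ^ (k + 1) := by
          rw [pow_succ]
          gcongr
          exact hc y

theorem pow_le_transferSum_mul (hDf : ∀ x, 0 < Df x) {n : ℕ} {c : ℝ≥0∞}
    (hc : ∀ y, c ≤ transferSum f Df s n y) (k : ℕ) (y : Λ) :
    c ^ k ≤ transferSum f Df s (k * n) y := by
  induction k generalizing y with
  | zero => simp [transferSum_zero]
  | succ k ih =>
    calc c ^ (k + 1) ≤ c ^ k * transferSum f Df s n y := by
          rw [pow_succ]
          gcongr
          exact hc y
      _ = ∑' z : ↥(f^[n] ⁻¹' {y}), c ^ k * orbWeight f Df s n z := ENNReal.tsum_mul_left.symm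
      _ ≤ ∑' z : ↥(f^[n] ⁻¹' {y}), transferSum f Df s (k * n) z * orbWeight f Df s n z := by
          gcongr
          exact ih _
      _ = transferSum f Df s ((k + 1) * n) y := by
          rw [add_one_mul, transferSum_add hDf]

theorem transferSum_ne_top (hfib : ∀ y, (f ⁻¹' {y}).Finite) (n : ℕ) (y : Λ) :
    transferSum f Df s n y ≠ ⊤ := by
  have := (finite_preimage_iterate hfib n y).fintype
  rw [transferSum, tsum_fintype]
  exact ENNReal.sum_ne_top.2 fun _ _ => ENNReal.ofReal_ne_top

theorem transferSum_pos (hsurj : Function.Surjective f) (hDf : ∀ x, 0 < Df x) (n : ℕ) (y : Λ) :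
    0 < transferSum f Df s n y := by
  obtain ⟨x, hx⟩ := hsurj.iterate n y
  exact (orbWeight_pos hDf n x).trans_le
    (ENNReal.le_tsum (f := fun x : ↥(f^[n] ⁻¹' {y}) => orbWeight f Df s n x) ⟨x, hx⟩)

theorem tsum_orbDeriv_rpow_neg (hDf : ∀ x, 0 < Df x) (n : ℕ) (y : Λ) :
    ∑' x : ↥(f^[n] ⁻¹' {y}), orbDeriv f Df n x ^ (-s) = (transferSum f Df s n y).toReal := by
  simp only [transferSum, orbWeight]
  rw [ENNReal.tsum_toReal_eq fun _ => ENNReal.ofReal_ne_top]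
  exact tsum_congr fun x =>
    (ENNReal.toReal_ofReal (Real.rpow_nonneg (orbDeriv_pos hDf n _).le _)).symm

theorem Mn_eq_toReal_iSup (hDf : ∀ x, 0 < Df x) (hfib : ∀ y, (f ⁻¹' {y}).Finite) (n : ℕ) :
    Mn f Df s n = (⨆ y, transferSum f Df s n y).toReal := by
  rw [ENNReal.toReal_iSup (transferSum_ne_top hfib n)]
  simp only [Mn, tsum_orbDeriv_rpow_neg hDf]

theorem mn_eq_toReal_iInf (hDf : ∀ x, 0 < Df x) (hfib : ∀ y, (f ⁻¹' {y}).Finite) (n : ℕ) :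
    mn f Df s n = (⨅ y, transferSum f Df s n y).toReal := by
  rw [ENNReal.toReal_iInf (transferSum_ne_top hfib n)]
  simp only [mn, tsum_orbDeriv_rpow_neg hDf]

theorem one_le_iSup_transferSum [Nonempty Λ] (hsurj : Function.Surjective f)
    (hDf : ∀ x, 0 < Df x) (hfib : ∀ y, (f ⁻¹' {y}).Finite)
    (hbdd : ∀ n, ⨆ y, transferSum f Df s n y ≠ ⊤)
    (hP : Tendsto (fun n : ℕ => (n : ℝ)⁻¹ * Real.log (Mn f Df s n)) atTop (𝓝 0)) (n : ℕ) :
    1 ≤ ⨆ y, transferSum f Df s n y := by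
  rcases eq_or_ne n 0 with rfl | hn
  · simp [transferSum_zero]
  have hpos (m : ℕ) : 0 < (⨆ y, transferSum f Df s m y).toReal := by
    refine ENNReal.toReal_pos (bot_lt_iff_ne_bot.1 ?_) (hbdd m)
    exact (transferSum_pos hsurj hDf m _).trans_le (le_iSup _ (Classical.arbitrary Λ))
  have hlog : 0 ≤ Real.log (⨆ y, transferSum f Df s n y).toReal := by
    simp only [Mn_eq_toReal_iSup hDf hfib] at hP
    refine (mul_zero (n : ℝ)).ge.trans
      (mul_le_log_of_tendsto_inv_mul_log hn hP (fun k => hpos _) fun k => ?_)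
    rw [← ENNReal.toReal_pow]
    exact ENNReal.toReal_mono (ENNReal.pow_ne_top (hbdd n))
      (iSup_le (transferSum_mul_le_pow hDf (le_iSup _) k))
  by_contra! hlt
  refine hlog.not_gt (Real.log_neg (hpos n) ?_)
  simpa using (ENNReal.toReal_lt_toReal (hbdd n) ENNReal.one_ne_top).2 hlt

theorem iInf_transferSum_le_one [Nonempty Λ] (hDf : ∀ x, 0 < Df x)
    (hfib : ∀ y, (f ⁻¹' {y}).Finite)
    (hP : Tendsto (fun n : ℕ => (n : ℝ)⁻¹ * Real.log (mn f Df s n)) atTop (𝓝 0)) (n : ℕ) :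
    ⨅ y, transferSum f Df s n y ≤ 1 := by
  rcases eq_or_ne n 0 with rfl | hn
  · simp [transferSum_zero]
  have hfin (m : ℕ) : ⨅ y, transferSum f Df s m y ≠ ⊤ :=
    ((iInf_le _ (Classical.arbitrary Λ)).trans_lt (transferSum_ne_top hfib m _).lt_top).ne
  by_contra! hlt
  have hone : 1 < (⨅ y, transferSum f Df s n y).toReal := by
    simpa using (ENNReal.toReal_lt_toReal ENNReal.one_ne_top (hfin n)).2 hlt
  have hlog : Real.log (⨅ y, transferSum f Df s n y).toReal ≤ 0 := by
    simp only [mn_eq_toReal_iInf hDf hfib] at hP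
    refine (log_le_mul_of_tendsto_inv_mul_log hn hP (one_pos.trans hone) fun k => ?_).trans
      (mul_zero (n : ℝ)).le
    rw [← ENNReal.toReal_pow]
    exact ENNReal.toReal_mono (hfin _) (le_iInf (pow_le_transferSum_mul hDf (iInf_le _) k))
  exact hlog.not_gt (Real.log_pos hone)

end TransferSum

section Comparison

variable {Λ : Type*} [MetricSpace Λ] {f : Λ → Λ} {Df : Λ → ℝ} {δ a b s r C : ℝ} {n n₀ : ℕ}
  {x y z u : Λ}

theorem BoundedDistortion.orbWeight_le (hC : BoundedDistortion f Df r C) (hr : 0 < r)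
    (hDf : ∀ x, 0 < Df x) (hs : 0 ≤ s) (hu : u ∈ bowenBall f r n x) :
    orbWeight f Df s n u ≤ ENNReal.ofReal (C ^ s) * orbWeight f Df s n x :=
  ofReal_rpow_neg_le_mul hs (orbDeriv_pos hDf n x) (one_pos.trans_le (hC.one_le hr x))
    (hC.orbDeriv_le hr hu)

namespace ExpandingAtScale

theorem transferSum_le_of_dist_lt (hf : ExpandingAtScale f Df δ a b)
    (hC : BoundedDistortion f Df (δ / 2) C) (hs : 0 ≤ s) (n : ℕ) (hzy : dist z y < δ / 2) :
    transferSum f Df s n y ≤ ENNReal.ofReal (C ^ s) * transferSum f Df s n z := by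
  have hr : 0 < δ / 2 := half_pos hf.scale_pos
  have hbranch : ∀ x ∈ f^[n] ⁻¹' {y}, ∃ u, x ∈ bowenBall f (δ / 2) n u ∧ f^[n] u = z := by
    rintro x rfl
    obtain ⟨u, hu, huz⟩ := hf.exists_mem_bowenBall_iterate_eq n hzy
    exact ⟨u, mem_bowenBall_comm.1 hu, huz⟩
  choose! g hxg hgz using hbranch
  refine tsum_subtype_le_mul_tsum_of_injOn (g := g) (T := f^[n] ⁻¹' {z})
    hgz (fun x hx x' hx' hxx' => ?_) fun x hx => hC.orbWeight_le hr hf.deriv_pos hs (hxg x hx)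
  exact hC.injOn_iterate hr hf.deriv_pos n (g x) (hxg x hx) (hxx' ▸ hxg x' hx')
    (hx.trans hx'.symm)

theorem transferSum_le_mul_transferSum_add_iterate (hf : ExpandingAtScale f Df δ a b)
    (hs : 0 ≤ s) (m n : ℕ) (z : Λ) :
    transferSum f Df s m z ≤
      ENNReal.ofReal ((b ^ n) ^ s) * transferSum f Df s (m + n) (f^[n] z) := by
  have hweight : 1 ≤ ENNReal.ofReal ((b ^ n) ^ s) * orbWeight f Df s n z := by
    have hb : 0 < b := one_pos.trans (hf.one_lt_upper z)
    simpa [orbWeight] using ofReal_rpow_neg_le_mul (q := 1) hs (orbDeriv_pos hf.deriv_pos n z)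
      (pow_pos hb n) (by simpa using orbDeriv_le_pow hf.deriv_pos hf.deriv_le n z)
  calc transferSum f Df s m z
      ≤ ENNReal.ofReal ((b ^ n) ^ s) * orbWeight f Df s n z * transferSum f Df s m z :=
        le_mul_of_one_le_left' hweight
    _ = ENNReal.ofReal ((b ^ n) ^ s) * (transferSum f Df s m z * orbWeight f Df s n z) := by ring
    _ ≤ ENNReal.ofReal ((b ^ n) ^ s) * transferSum f Df s (m + n) (f^[n] z) := by
        rw [transferSum_add hf.deriv_pos]
        gcongr
        exact ENNReal.le_tsum (f := fun z' : ↥(f^[n] ⁻¹' {f^[n] z}) =>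
          transferSum f Df s m z' * orbWeight f Df s n z') ⟨z, rfl⟩

theorem transferSum_le_mul_transferSum_add_of_mixing (hf : ExpandingAtScale f Df δ a b)
    (hC : BoundedDistortion f Df (δ / 2) C) (hs : 0 ≤ s)
    (hmix : ∀ x, f^[n₀] '' ball x (δ / 2) = univ) (n : ℕ) (x y : Λ) :
    transferSum f Df s n x ≤
      ENNReal.ofReal (C ^ s) * ENNReal.ofReal ((b ^ n₀) ^ s) * transferSum f Df s (n + n₀) y := by
  obtain ⟨z, hz, rfl⟩ : y ∈ f^[n₀] '' ball x (δ / 2) := (hmix x).ge (mem_univ y)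
  rw [mul_assoc]
  exact (hf.transferSum_le_of_dist_lt hC hs n hz).trans
    (mul_le_mul_right (hf.transferSum_le_mul_transferSum_add_iterate hs n n₀ z) _)

theorem exists_transferSum_bounds [Nonempty Λ] (hf : ExpandingAtScale f Df δ a b)
    (hC : BoundedDistortion f Df (δ / 2) C) (hs : 0 ≤ s)
    (hmix : ∀ x, f^[n₀] '' ball x (δ / 2) = univ) (hsurj : Function.Surjective f)
    (hfib : ∀ y, (f ⁻¹' {y}).Finite)
    (hmn : Tendsto (fun n : ℕ => (n : ℝ)⁻¹ * Real.log (mn f Df s n)) atTop (𝓝 0))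
    (hMn : Tendsto (fun n : ℕ => (n : ℝ)⁻¹ * Real.log (Mn f Df s n)) atTop (𝓝 0)) :
    ∃ K ≠ ⊤, (∀ n y, transferSum f Df s n y ≤ K) ∧
      ∀ᶠ n in atTop, ∀ y, K⁻¹ ≤ transferSum f Df s n y := by
  set K := ENNReal.ofReal (C ^ s) * ENNReal.ofReal ((b ^ n₀) ^ s) with hK_def
  obtain ⟨x₀⟩ := ‹Nonempty Λ›
  have hcomp := hf.transferSum_le_mul_transferSum_add_of_mixing hC hs hmix
  have hK_top : K ≠ ⊤ := ENNReal.mul_ne_top ENNReal.ofReal_ne_top ENNReal.ofReal_ne_top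
  have hK₀ : K ≠ 0 := fun hK₀ => by
    have hle := hcomp 0 x₀ x₀
    rw [← hK_def, hK₀, zero_mul, transferSum_zero] at hle
    exact one_ne_zero (nonpos_iff_eq_zero.1 hle)
  have hbdd (n : ℕ) : ⨆ y, transferSum f Df s n y ≠ ⊤ :=
    ((iSup_le fun z => hcomp n z x₀).trans_lt
      (ENNReal.mul_lt_top hK_top.lt_top (transferSum_ne_top hfib _ _).lt_top)).ne
  refine ⟨K, hK_top, fun n y => ?_, ?_⟩
  · calc transferSum f Df s n y ≤ K * ⨅ z, transferSum f Df s (n + n₀) z := by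
          rw [ENNReal.mul_iInf_of_ne hK₀ hK_top]
          exact le_iInf (hcomp n y)
      _ ≤ K * 1 := by
          gcongr
          exact iInf_transferSum_le_one hf.deriv_pos hfib hmn _
      _ = K := mul_one K
  · filter_upwards [eventually_ge_atTop n₀] with n hn y
    obtain ⟨m, rfl⟩ := Nat.exists_eq_add_of_le' hn
    rw [ENNReal.inv_le_iff_le_mul (fun _ => hK₀) (fun h => absurd h hK_top)]
    exact (one_le_iSup_transferSum hsurj hf.deriv_pos hfib hbdd hMn m).trans
      (iSup_le fun z => hcomp m z y)

end ExpandingAtScale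

end Comparison
section HausdorffMeasure

variable {Λ : Type*} [MetricSpace Λ] {f : Λ → Λ} {Df : Λ → ℝ} {δ a b s r ρ C : ℝ} {K : ℝ≥0∞}
  {n k : ℕ} {x : Λ} {F U : Set Λ}

/-- The measure with mass `orbWeight n x` at each `x` in the fibre of `f^[n]` over `y`; its total
mass is `transferSum n y`. As `n` grows it plays the role of a conformal measure of
exponent `s`. -/
def fiberMeasure [MeasurableSpace Λ] (f : Λ → Λ) (Df : Λ → ℝ) (s : ℝ) (n : ℕ) (y : Λ) :
    Measure Λ :=
  Measure.sum fun x : ↥(f^[n] ⁻¹' {y}) => orbWeight f Df s n x • Measure.dirac (x : Λ)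

theorem fiberMeasure_apply [MeasurableSpace Λ] (hU : MeasurableSet U) (n : ℕ) (y : Λ) :
    fiberMeasure f Df s n y U = ∑' x : ↥(f^[n] ⁻¹' {y} ∩ U), orbWeight f Df s n x := by
  have hterm (x : Λ) : (orbWeight f Df s n x • Measure.dirac x) U =
      U.indicator (orbWeight f Df s n) x := by
    by_cases hx : x ∈ U <;> simp [Measure.dirac_apply' x hU, hx]
  rw [fiberMeasure, Measure.sum_apply _ hU]
  simp only [hterm]
  rw [tsum_subtype _ (U.indicator (orbWeight f Df s n)), indicator_indicator, tsum_subtype]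

theorem fiberMeasure_univ [MeasurableSpace Λ] (n : ℕ) (y : Λ) :
    fiberMeasure f Df s n y univ = transferSum f Df s n y := by
  rw [fiberMeasure_apply .univ, inter_univ, transferSum]

namespace BoundedDistortion

theorem ediam_bowenBall_rpow_le (hC : BoundedDistortion f Df r C) (hr : 0 < r)
    (hDf : ∀ x, 0 < Df x) (hs : 0 ≤ s) (n : ℕ) (x : Λ) :
    ediam (bowenBall f r n x) ^ s ≤
      ENNReal.ofReal ((2 * r * C) ^ s) * orbWeight f Df s n x := by
  have hC₀ : 0 < C := one_pos.trans_le (hC.one_le hr x)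
  have horb := orbDeriv_pos (f := f) hDf n x
  calc ediam (bowenBall f r n x) ^ s
      ≤ ENNReal.ofReal (2 * r * C / orbDeriv f Df n x) ^ s := by
        gcongr
        exact hC.ediam_bowenBall_le hr hDf n x
    _ = ENNReal.ofReal ((2 * r * C) ^ s) * orbWeight f Df s n x := by
        rw [ENNReal.ofReal_rpow_of_nonneg (by positivity) hs, orbWeight,
          ← ENNReal.ofReal_mul (by positivity), Real.div_rpow (by positivity) horb.le,
          Real.rpow_neg horb.le, div_eq_mul_inv]

theorem fiberMeasure_add_le [MeasurableSpace Λ] (hC : BoundedDistortion f Df r C) (hr : 0 < r)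
    (hDf : ∀ x, 0 < Df x) (hs : 0 ≤ s) (hU : MeasurableSet U) (hUx : U ⊆ bowenBall f r k x)
    (m : ℕ) (y : Λ) :
    fiberMeasure f Df s (k + m) y U ≤
      ENNReal.ofReal (C ^ s) * orbWeight f Df s k x * transferSum f Df s m y := by
  rw [fiberMeasure_apply hU]
  refine tsum_subtype_le_mul_tsum_of_injOn (g := f^[k]) (T := f^[m] ⁻¹' {y})
    (fun u hu => ?_) ((hC.injOn_iterate hr hDf k x).mono fun u hu => hUx hu.2) fun u hu => ?_
  · rw [mem_preimage, ← Function.iterate_add_apply, add_comm]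
    exact hu.1
  · rw [orbWeight_add hDf]
    gcongr
    exact hC.orbWeight_le hr hDf hs (hUx hu.2)

end BoundedDistortion

namespace ExpandingAtScale

theorem iUnion_bowenBall_eq_univ (hf : ExpandingAtScale f Df δ a b)
    (hF : univ ⊆ ⋃ y ∈ F, ball y (δ / 2)) (n : ℕ) :
    ⋃ x : ↥(f^[n] ⁻¹' F), bowenBall f (δ / 2) n x = univ := by
  refine eq_univ_of_forall fun u => ?_
  obtain ⟨y, hy, huy⟩ := mem_iUnion₂.1 (hF (mem_univ (f^[n] u)))
  obtain ⟨x, hx, rfl⟩ := hf.exists_mem_bowenBall_iterate_eq n (mem_ball_comm.1 huy)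
  exact mem_iUnion.2 ⟨⟨x, hy⟩, mem_bowenBall_comm.1 hx⟩

theorem tsum_ediam_bowenBall_rpow_le (hf : ExpandingAtScale f Df δ a b)
    (hC : BoundedDistortion f Df (δ / 2) C) (hs : 0 ≤ s)
    (hK : ∀ y, transferSum f Df s n y ≤ K) (F : Set Λ) :
    ∑' x : ↥(f^[n] ⁻¹' F), ediam (bowenBall f (δ / 2) n x) ^ s ≤
      ENNReal.ofReal ((2 * (δ / 2) * C) ^ s) * ∑' _ : F, K :=
  calc ∑' x : ↥(f^[n] ⁻¹' F), ediam (bowenBall f (δ / 2) n x) ^ s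
      ≤ ∑' x : ↥(f^[n] ⁻¹' F),
          ENNReal.ofReal ((2 * (δ / 2) * C) ^ s) * orbWeight f Df s n x :=
        ENNReal.tsum_le_tsum fun x =>
          hC.ediam_bowenBall_rpow_le (half_pos hf.scale_pos) hf.deriv_pos hs n x
    _ = ENNReal.ofReal ((2 * (δ / 2) * C) ^ s) * ∑' y : F, transferSum f Df s n y := by
        rw [ENNReal.tsum_mul_left, tsum_preimage_eq_tsum_fiber]
        rfl
    _ ≤ ENNReal.ofReal ((2 * (δ / 2) * C) ^ s) * ∑' _ : F, K := by
        gcongr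
        exact hK _

theorem exists_tendsto_zero_ediam_bowenBall_le [Nonempty Λ] (hf : ExpandingAtScale f Df δ a b)
    (hC : BoundedDistortion f Df (δ / 2) C) :
    ∃ R : ℕ → ℝ≥0∞, Tendsto R atTop (𝓝 0) ∧
      ∀ n x, ediam (bowenBall f (δ / 2) n x) ≤ R n := by
  have hδ := half_pos hf.scale_pos
  have hC₀ : 0 < C := one_pos.trans_le (hC.one_le hδ (Classical.arbitrary Λ))
  have ha : 0 < a := one_pos.trans hf.one_lt
  refine ⟨fun n => ENNReal.ofReal (2 * (δ / 2) * C / a ^ n), ?_, fun n x => ?_⟩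
  · simpa using ENNReal.tendsto_ofReal
      (tendsto_const_nhds.div_atTop (tendsto_pow_atTop_atTop_of_one_lt hf.one_lt))
  · refine (hC.ediam_bowenBall_le hδ hf.deriv_pos n x).trans ?_
    have hpow := pow_le_orbDeriv (f := f) ha.le hf.le_deriv n x
    dsimp only
    gcongr

theorem hausdorffMeasure_univ_lt_top [CompactSpace Λ] [Nonempty Λ] [MeasurableSpace Λ]
    [BorelSpace Λ] (hf : ExpandingAtScale f Df δ a b) (hC : BoundedDistortion f Df (δ / 2) C)
    (hs : 0 ≤ s) (hfib : ∀ y, (f ⁻¹' {y}).Finite) (hK_top : K ≠ ⊤)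
    (hK : ∀ n y, transferSum f Df s n y ≤ K) : μH[s] (univ : Set Λ) < ⊤ := by
  obtain ⟨F, -, hF_fin, hF⟩ :=
    (isCompact_univ (X := Λ)).finite_cover_balls (half_pos hf.scale_pos)
  have (n : ℕ) : Countable ↥(f^[n] ⁻¹' F) :=
    (hF_fin.preimage' fun y _ => finite_preimage_iterate hfib n y).countable
  obtain ⟨R, hR, hdiam⟩ := hf.exists_tendsto_zero_ediam_bowenBall_le hC
  calc μH[s] (univ : Set Λ)
      ≤ liminf (fun n => ∑' x : ↥(f^[n] ⁻¹' F), ediam (bowenBall f (δ / 2) n x) ^ s) atTop :=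
        Measure.hausdorffMeasure_le_liminf_tsum s univ R hR _
          (Eventually.of_forall fun n x => hdiam n x)
          (Eventually.of_forall fun n => (hf.iUnion_bowenBall_eq_univ hF n).ge)
    _ ≤ liminf (fun _ : ℕ => ENNReal.ofReal ((2 * (δ / 2) * C) ^ s) * ∑' _ : F, K) atTop :=
        liminf_le_liminf (Eventually.of_forall fun n =>
          hf.tsum_ediam_bowenBall_rpow_le hC hs (hK n) F)
    _ = ENNReal.ofReal ((2 * (δ / 2) * C) ^ s) * ∑' _ : F, K := liminf_const _
    _ < ⊤ := by
        have := hF_fin.fintype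
        rw [tsum_fintype]
        exact ENNReal.mul_lt_top ENNReal.ofReal_lt_top
          (ENNReal.sum_lt_top.2 fun _ _ => hK_top.lt_top)

theorem ball_subset_bowenBall (hf : ExpandingAtScale f Df δ a b)
    (hC : BoundedDistortion f Df (δ / 2) C) (hρ : 0 < ρ)
    (hk : C * b * ρ * orbDeriv f Df k x ≤ δ / 2) : ball x ρ ⊆ bowenBall f (δ / 2) k x := by
  have hδ := half_pos hf.scale_pos
  have hC₁ : 1 ≤ C := hC.one_le hδ x
  have hb : 1 < b := hf.one_lt_upper x
  have hmono := monotone_orbDeriv (f := f) (fun y => hf.one_lt.le.trans (hf.le_deriv y)) x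
  have hsmall (j : ℕ) (hj : j ≤ k) : C * b * ρ * orbDeriv f Df j x ≤ δ / 2 :=
    le_trans (by gcongr; exact hmono hj) hk
  intro u hu
  suffices ∀ j ≤ k, u ∈ bowenBall f (δ / 2) j x from this k le_rfl
  intro j
  induction j with
  | zero =>
    intro _
    rw [bowenBall_zero]
    refine ball_subset_ball (le_trans ?_ (hsmall 0 k.zero_le)) hu
    rw [orbDeriv_zero, mul_one]
    exact le_mul_of_one_le_left hρ.le (one_le_mul_of_one_le_of_one_le hC₁ hb.le)
  | succ j ih =>
    intro hj
    have huj := ih (by lia)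
    refine mem_bowenBall_succ'.2 ⟨huj, ?_⟩
    have horb := orbDeriv_pos (f := f) hf.deriv_pos j x
    simp only [Function.iterate_succ_apply']
    calc dist (f (f^[j] u)) (f (f^[j] x)) ≤ b * dist (f^[j] u) (f^[j] x) :=
          hf.dist_le_mul ((huj j le_rfl).trans (half_lt_self hf.scale_pos))
      _ ≤ b * (C * orbDeriv f Df j x * dist u x) := by
          gcongr
          exact hC.dist_iterate_le hδ huj (mem_bowenBall_self hδ)
      _ < b * (C * orbDeriv f Df j x * ρ) := by
          gcongr
          exact hu
      _ = C * b * ρ * orbDeriv f Df j x := by ring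
      _ ≤ δ / 2 := hsmall j (by lia)

theorem exists_ball_subset_bowenBall (hf : ExpandingAtScale f Df δ a b)
    (hC : BoundedDistortion f Df (δ / 2) C) (x : Λ) (hρ : ρ ∈ Ioo 0 (δ / 2 / (C * b))) :
    ∃ k, ball x ρ ⊆ bowenBall f (δ / 2) k x ∧
      ρ⁻¹ ≤ C * b ^ 2 / (δ / 2) * orbDeriv f Df k x := by
  have hδ := half_pos hf.scale_pos
  have hC₀ : 0 < C := one_pos.trans_le (hC.one_le hδ x)
  have hb : 0 < b := one_pos.trans (hf.one_lt_upper x)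
  have hρ₀ : 0 < ρ := hρ.1
  have hscale : 1 ≤ δ / 2 / (C * b * ρ) := by
    rw [one_le_div (by positivity)]
    exact ((lt_div_iff₀' (by positivity)).1 hρ.2).le
  obtain ⟨k, hk, hk'⟩ := exists_orbDeriv_le_lt_mul hf.one_lt hf.le_deriv hf.deriv_le hscale x
  refine ⟨k, hf.ball_subset_bowenBall hC hρ₀ ((le_div_iff₀' (by positivity)).1 hk), ?_⟩
  calc ρ⁻¹ = C * b / (δ / 2) * (δ / 2 / (C * b * ρ)) := by
        have := hf.scale_pos
        field_simp
    _ ≤ C * b / (δ / 2) * (b * orbDeriv f Df k x) := by gcongr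
    _ = C * b ^ 2 / (δ / 2) * orbDeriv f Df k x := by ring

theorem eventually_fiberMeasure_ball_le [MeasurableSpace Λ] [BorelSpace Λ]
    (hf : ExpandingAtScale f Df δ a b) (hC : BoundedDistortion f Df (δ / 2) C) (hs : 0 ≤ s)
    (hK : ∀ n y, transferSum f Df s n y ≤ K) (x y : Λ) (hρ : ρ ∈ Ioo 0 (δ / 2 / (C * b))) :
    ∀ᶠ n in atTop, fiberMeasure f Df s n y (ball x ρ) ≤
      ENNReal.ofReal (C ^ s) * ENNReal.ofReal ((C * b ^ 2 / (δ / 2)) ^ s) * K *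
        ENNReal.ofReal ρ ^ s := by
  have hδ := half_pos hf.scale_pos
  have hC₀ : 0 < C := one_pos.trans_le (hC.one_le hδ x)
  have hb : 0 < b := one_pos.trans (hf.one_lt_upper x)
  obtain ⟨k, hsub, hk⟩ := hf.exists_ball_subset_bowenBall hC x hρ
  have hweight : orbWeight f Df s k x ≤
      ENNReal.ofReal ((C * b ^ 2 / (δ / 2)) ^ s) * ENNReal.ofReal ρ ^ s := by
    rw [ENNReal.ofReal_rpow_of_nonneg hρ.1.le hs]
    simpa only [orbWeight, Real.rpow_neg (inv_pos.2 hρ.1).le, Real.inv_rpow hρ.1.le, inv_inv] using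
      ofReal_rpow_neg_le_mul hs (inv_pos.2 hρ.1) (by positivity) hk
  filter_upwards [eventually_ge_atTop k] with n hn
  obtain ⟨m, rfl⟩ := Nat.exists_eq_add_of_le hn
  calc fiberMeasure f Df s (k + m) y (ball x ρ)
      ≤ ENNReal.ofReal (C ^ s) * orbWeight f Df s k x * transferSum f Df s m y :=
        hC.fiberMeasure_add_le hδ hf.deriv_pos hs measurableSet_ball hsub m y
    _ ≤ ENNReal.ofReal (C ^ s) *
          (ENNReal.ofReal ((C * b ^ 2 / (δ / 2)) ^ s) * ENNReal.ofReal ρ ^ s) * K := by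
        gcongr
        exact hK m y
    _ = _ := by ring

theorem hausdorffMeasure_univ_pos [CompactSpace Λ] [Nonempty Λ] [MeasurableSpace Λ]
    [BorelSpace Λ] (hf : ExpandingAtScale f Df δ a b) (hC : BoundedDistortion f Df (δ / 2) C)
    (hs : 0 ≤ s) (hK_top : K ≠ ⊤) (hK : ∀ n y, transferSum f Df s n y ≤ K)
    (hK_inv : ∀ᶠ n in atTop, ∀ y, K⁻¹ ≤ transferSum f Df s n y) :
    0 < μH[s] (univ : Set Λ) := by
  obtain ⟨y⟩ := ‹Nonempty Λ›
  have hδ := half_pos hf.scale_pos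
  have hC₀ : 0 < C := one_pos.trans_le (hC.one_le hδ y)
  have hb : 0 < b := one_pos.trans (hf.one_lt_upper y)
  refine lt_of_lt_of_le ?_ (div_le_hausdorffMeasure_of_eventually_measure_ball_le
    (l := atTop) (ν := fun n => fiberMeasure f Df s n y) hs (by positivity) (c := K⁻¹) ?_
    fun x ρ hρ => hf.eventually_fiberMeasure_ball_le hC hs hK x y hρ)
  · refine ENNReal.div_pos (ENNReal.inv_ne_zero.2 hK_top) ?_
    exact ENNReal.mul_ne_top (ENNReal.mul_ne_top ENNReal.ofReal_ne_top ENNReal.ofReal_ne_top)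
      hK_top
  · simpa only [fiberMeasure_univ] using hK_inv.mono fun n hn => hn y

end ExpandingAtScale

end HausdorffMeasure

/-- **Finiteness of the Hausdorff measure.** If `∫₀^{λ₀δ_f} ε(t)/t dt < ∞` then the
`s_crit`-dimensional Hausdorff measure of `Λ` is finite and positive. -/
theorem hausdorff_measure_finite {Λ : Type*} [MetricSpace Λ] [CompactSpace Λ] [Nonempty Λ]
    [MeasurableSpace Λ] [BorelSpace Λ]
    (hpt : ∀ x : Λ, (𝓝[≠] x).NeBot)
    (f : Λ → Λ) (Df : Λ → ℝ)
    (hcont : Continuous f) (hsurj : Function.Surjective f)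
    (hconf : IsConfDeriv f Df)
    (hexp : UnifExpanding f Df)
    (hopen : IsOpenMap f)
    (hfib : ∀ y : Λ, (f ⁻¹' {y}).Finite)
    (hmix : ∀ δ : ℝ, 0 < δ → ∃ n₀ : ℕ, ∀ x : Λ, f^[n₀] '' ball x δ = Set.univ)
    (β lam₀ lam₁ δf : ℝ)
    (hβ : 1 < β) (hDfβ : ∀ x : Λ, β ≤ Df x)
    (hlam₀ : 1 < lam₀) (hlam₀β : lam₀ < β) (hδf : 0 < δf)
    (hC2' : ∀ u v : Λ, u ≠ v → dist u v < δf →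
      lam₀ ≤ dist (f u) (f v) / dist u v ∧ dist (f u) (f v) / dist u v ≤ lam₁)
    (hC3' : ∀ x : Λ, ball (f x) δf ⊆ f '' ball x δf)
    -- the common finite pressure function and its unique zero `s_crit`
    (P : ℝ → ℝ)
    (hP : ∀ s : ℝ, 0 ≤ s →
      Filter.Tendsto (fun n : ℕ => (n : ℝ)⁻¹ * Real.log (mn f Df s n))
        Filter.atTop (𝓝 (P s)) ∧
      Filter.Tendsto (fun n : ℕ => (n : ℝ)⁻¹ * Real.log (Mn f Df s n))
        Filter.atTop (𝓝 (P s)))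
    (scrit : ℝ) (hscrit₀ : 0 ≤ scrit) (hzero : P scrit = 0)
    (huniq : ∀ s : ℝ, 0 ≤ s → P s = 0 → s = scrit)
    -- the Dini-type integrability condition on the distortion modulus
    (hdini : MeasureTheory.IntegrableOn (fun t : ℝ => distMod f Df δf t / t)
      (Set.Ioc 0 (lam₀ * δf))) :
    0 < μH[scrit] (Set.univ : Set Λ) ∧ μH[scrit] (Set.univ : Set Λ) < ⊤ := by
  have hf : ExpandingAtScale f Df δf lam₀ lam₁ := hconf.expandingAtScale hpt hlam₀ hδf
    (fun x => hlam₀β.le.trans (hDfβ x)) hC2' hC3'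
  have hscale : δf / 2 ≤ lam₀ * δf :=
    (half_le_self hδf.le).trans (le_mul_of_one_le_left hδf.le hlam₀.le)
  obtain ⟨C, hC⟩ := hf.exists_boundedDistortion
    (hdini.mono_set (Ioc_subset_Ioc_right hscale))
  obtain ⟨n₀, hn₀⟩ := hmix (δf / 2) (half_pos hδf)
  obtain ⟨hmn, hMn⟩ := hP scrit hscrit₀
  rw [hzero] at hmn hMn
  obtain ⟨K, hK_top, hK, hK_inv⟩ :=
    hf.exists_transferSum_bounds hC hscrit₀ hn₀ hsurj hfib hmn hMn
  exact ⟨hf.hausdorffMeasure_univ_pos hC hscrit₀ hK_top hK hK_inv,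
    hf.hausdorffMeasure_univ_lt_top hC hscrit₀ hfib hK_top hK⟩

end
end

section
/- Parameter dependence of the pressure: Let F=(f_n) and F̃=(f̃_n) be sequences in ℰ(Δ,β,ε) with d_∞(F,F̃) := sup_n d_ℰ(f_n,f̃_n) ≤ r ≤ ε(Δ). Then for all s≥0: |P̲(s,F) − P̲(s,F̃)| ≤ 2rs, and (1 + 2r/log β)^{-1} ≤ s̲_crit(F)/s̲_crit(F̃) ≤ 1 + 2r/log β. The same two bounds hold with P̲ replaced by P̄ and s̲_crit replaced by s̄_crit. -/
open Filter Topology Metric Set MeasureTheory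
open scoped Classical ENNReal

noncomputable section

/-- divided difference `f[u,x]`, equal to `Df x` on the diagonal. -/
def divq {K : Type*} [MetricSpace K] (f : K → K) (Df : K → ℝ) (u x : K) : ℝ :=
  if u = x then Df x else dist (f u) (f x) / dist u x

/-- The class `ℰ(Δ,β,ε)` of `C¹`-conformal unramified covering maps `f : Ω_f → K` of finite
maximal degree satisfying conditions (T0)–(T3). -/
structure ConfCover (K : Type*) [MetricSpace K] (Δ β : ℝ) (ε : ℝ → ℝ) where
  /-- the domain `Ω_f ⊆ K` -/
  dom : Set K
  /-- the map (only its restriction to `dom` matters) -/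
  toFun : K → K
  /-- the conformal derivative -/
  Df : K → ℝ
  /-- the local injectivity radius function `δ_f` -/
  δf : K → ℝ
  /-- the lower bound `δ(f)` for `δ_f` -/
  δ0 : ℝ
  /-- the upper dilation bound `λ₁(f)` -/
  lam1 : ℝ
  /-- a bound on the (finite) maximal degree -/
  degBound : ℕ
  δ0_pos : 0 < δ0
  δf_mem : ∀ x ∈ dom, δ0 ≤ δf x ∧ δf x ≤ Δ
  /-- `f` maps `Ω_f` onto `K` -/
  surj : ∀ y : K, ∃ x ∈ dom, toFun x = y
  /-- fibers are finite -/
  fiber_finite : ∀ y : K, (dom ∩ toFun ⁻¹' {y}).Finite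
  /-- finite maximal degree -/
  fiber_card : ∀ y : K, (dom ∩ toFun ⁻¹' {y}).ncard ≤ degBound
  Df_pos : ∀ x ∈ dom, 0 < Df x
  /-- `C¹` conformality: `Df` is the double limit of difference quotients along `dom` -/
  conformal : ∀ x ∈ dom,
    Filter.Tendsto (fun p : K × K => dist (toFun p.1) (toFun p.2) / dist p.1 p.2)
      (((𝓝 x ⊓ 𝓟 dom) ×ˢ (𝓝 x ⊓ 𝓟 dom)) ⊓ 𝓟 {p : K × K | p.1 ≠ p.2}) (𝓝 (Df x))
  /-- (T0) local injectivity -/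
  t0 : ∀ x ∈ dom, ∀ x' ∈ dom, x ≠ x' → toFun x = toFun x' →
    Disjoint (Metric.ball x (δf x)) (Metric.ball x' (δf x'))
  /-- (T1) openness -/
  t1 : ∀ x ∈ dom, Metric.ball (toFun x) Δ ⊆ toFun '' (Metric.ball x (δf x) ∩ dom)
  /-- (T2) dilation -/
  t2 : ∀ x ∈ dom, ∀ u ∈ dom, dist u x < δf x →
    β ≤ divq toFun Df u x ∧ divq toFun Df u x ≤ lam1
  /-- (T3) distortion -/
  t3 : ∀ x ∈ dom, ∀ r : ℝ, 0 < r → r ≤ Δ →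
    ∀ u₁ ∈ Metric.ball x (δf x) ∩ dom ∩ toFun ⁻¹' Metric.ball (toFun x) r,
    ∀ u₂ ∈ Metric.ball x (δf x) ∩ dom ∩ toFun ⁻¹' Metric.ball (toFun x) r,
    |Real.log (divq toFun Df u₁ x / Df u₂)| ≤ ε r

namespace ConfCover

variable {K : Type*} [MetricSpace K] {Δ β : ℝ} {ε : ℝ → ℝ}

/-- the fiber `f⁻¹{y}` (inside the domain of `f`). -/
def fiber (f : ConfCover K Δ β ε) (y : K) : Set K := f.dom ∩ f.toFun ⁻¹' {y}

end ConfCover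

/-- the iterated map `f_t^{(n)} = f_{t+n} ∘ ⋯ ∘ f_{t+1}` (0-indexed sequences). -/
def iterFrom {K : Type*} [MetricSpace K] {Δ β : ℝ} {ε : ℝ → ℝ}
    (F : ℕ → ConfCover K Δ β ε) (t : ℕ) : ℕ → K → K
  | 0 => id
  | n + 1 => (F (t + n)).toFun ∘ iterFrom F t n

/-- the domain `Ω_n` of the iterated map starting at time `t`. -/
def domFrom {K : Type*} [MetricSpace K] {Δ β : ℝ} {ε : ℝ → ℝ}
    (F : ℕ → ConfCover K Δ β ε) (t n : ℕ) : Set K :=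
  {x : K | ∀ k < n, iterFrom F t k x ∈ (F (t + k)).dom}

/-- the time-zero repeller `Λ(F) = ∩_n Ω_n(F)`. -/
def ΛSet {K : Type*} [MetricSpace K] {Δ β : ℝ} {ε : ℝ → ℝ}
    (F : ℕ → ConfCover K Δ β ε) : Set K :=
  {x : K | ∀ k : ℕ, iterFrom F 0 k x ∈ (F k).dom}

/-- the conformal derivative `Df^{(n)}` of the iterated map (from time zero). -/
def iterDeriv {K : Type*} [MetricSpace K] {Δ β : ℝ} {ε : ℝ → ℝ}
    (F : ℕ → ConfCover K Δ β ε) (n : ℕ) (x : K) : ℝ :=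
  ∏ k ∈ Finset.range n, (F k).Df (iterFrom F 0 k x)

/-- the set of `n`-th preimages `(f^{(n)})⁻¹{y}`. -/
def preimages {K : Type*} [MetricSpace K] {Δ β : ℝ} {ε : ℝ → ℝ}
    (F : ℕ → ConfCover K Δ β ε) (n : ℕ) (y : K) : Set K :=
  {x ∈ domFrom F 0 n | iterFrom F 0 n x = y}

/-- `M_n(s) = sup_y Σ_{f^{(n)} x = y} (Df^{(n)}_x)^{-s}`. -/
def Mseq {K : Type*} [MetricSpace K] {Δ β : ℝ} {ε : ℝ → ℝ}
    (F : ℕ → ConfCover K Δ β ε) (s : ℝ) (n : ℕ) : ℝ :=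
  ⨆ y : K, ∑' x : ↥(preimages F n y), iterDeriv F n (x : K) ^ (-s)

/-- `m_n(s) = inf_y Σ_{f^{(n)} x = y} (Df^{(n)}_x)^{-s}`. -/
def mseq {K : Type*} [MetricSpace K] {Δ β : ℝ} {ε : ℝ → ℝ}
    (F : ℕ → ConfCover K Δ β ε) (s : ℝ) (n : ℕ) : ℝ :=
  ⨅ y : K, ∑' x : ↥(preimages F n y), iterDeriv F n (x : K) ^ (-s)

/-- the lower pressure `P̲(s) = liminf (1/n) log m_n(s)`, with values in `[-∞,∞]`. -/
def lowPressure {K : Type*} [MetricSpace K] {Δ β : ℝ} {ε : ℝ → ℝ}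
    (F : ℕ → ConfCover K Δ β ε) (s : ℝ) : EReal :=
  Filter.liminf (fun n : ℕ => (((n : ℝ)⁻¹ * Real.log (mseq F s n) : ℝ) : EReal)) Filter.atTop

/-- the upper pressure `P̄(s) = limsup (1/n) log M_n(s)`, with values in `[-∞,∞]`. -/
def upPressure {K : Type*} [MetricSpace K] {Δ β : ℝ} {ε : ℝ → ℝ}
    (F : ℕ → ConfCover K Δ β ε) (s : ℝ) : EReal :=
  Filter.limsup (fun n : ℕ => (((n : ℝ)⁻¹ * Real.log (Mseq F s n) : ℝ) : EReal)) Filter.atTop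

/-- (T4): the sequence is `(n₀,Δ)`-mixing. -/
def Mixing {K : Type*} [MetricSpace K] {Δ β : ℝ} {ε : ℝ → ℝ}
    (F : ℕ → ConfCover K Δ β ε) (Δ' : ℝ) (n₀ : ℕ) : Prop :=
  ∀ t : ℕ, ∀ y : K, ∀ z ∈ domFrom F t n₀,
    ∃ x ∈ domFrom F t n₀, iterFrom F t n₀ x = y ∧ dist x z ≤ Δ'

/-- (T5): sub-exponential growth of the dilation constants. -/
def SubExp {K : Type*} [MetricSpace K] {Δ β : ℝ} {ε : ℝ → ℝ}
    (F : ℕ → ConfCover K Δ β ε) : Prop :=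
  Filter.Tendsto (fun k : ℕ => Real.log (F k).lam1 / (k : ℝ)) Filter.atTop (𝓝 0)

/-- `K` admits a finite cover by `Δ`-balls. -/
def FiniteCover (K : Type*) [MetricSpace K] (Δ : ℝ) : Prop :=
  ∃ t : Finset K, ∀ x : K, ∃ c ∈ t, dist x c < Δ

/-- `K` is `Δ`-homogeneous. -/
def Homogeneous (K : Type*) [MetricSpace K] (Δ : ℝ) : Prop :=
  ∃ δ : ℝ, 0 < δ ∧ δ < Δ ∧ ∀ y : K, ∃ z : K, dist z y < Δ ∧ δ ≤ dist z y


/-- the distance `d_ℰ` on `ℰ(Δ,β,ε)` (valued in `[0,∞]`). -/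
def dE {K : Type*} [MetricSpace K] {Δ β : ℝ} {ε : ℝ → ℝ}
    (f g : ConfCover K Δ β ε) : ℝ≥0∞ :=
  ⨆ y : K, ⨅ π : ↥(f.fiber y) ≃ ↥(g.fiber y), ⨆ x : ↥(f.fiber y),
    ENNReal.ofReal
      (ε (β / (β - 1) * dist (x : K) ((π x : K))) + |Real.log (g.Df (π x) / f.Df x)|)

/-- the lower critical exponent `s̲_crit = sup {s ≥ 0 : P̲(s) > 0}` (in `[0,∞]`). -/
def scritLow {K : Type*} [MetricSpace K] {Δ β : ℝ} {ε : ℝ → ℝ}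
    (F : ℕ → ConfCover K Δ β ε) : ℝ≥0∞ :=
  sSup {x : ℝ≥0∞ | ∃ s : ℝ, 0 ≤ s ∧ x = ENNReal.ofReal s ∧ 0 < lowPressure F s}

/-- the upper critical exponent `s̄_crit = inf {s ≥ 0 : P̄(s) < 0}` (in `[0,∞]`). -/
def scritUp {K : Type*} [MetricSpace K] {Δ β : ℝ} {ε : ℝ → ℝ}
    (F : ℕ → ConfCover K Δ β ε) : ℝ≥0∞ :=
  sInf {x : ℝ≥0∞ | ∃ s : ℝ, 0 ≤ s ∧ x = ENNReal.ofReal s ∧ upPressure F s < 0}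

/-!
Let `y, y'` be points at a distance `< t`, where `ε t ≤ r`. Each `f`-preimage `x` of `y` is moved
to the nearby `f`-preimage of `y'`, at the cost of a factor `e ^ r` in the derivative by (T3), and
then to the matched `g`-preimage of `y'`, at the cost of another factor `e ^ r`. Since `f` expands
by `β`, the distance travelled is at most `β⁻¹ t + (1 - β⁻¹) q` with `ε q ≤ r`, so that it is again
controlled by `max t q` and the comparison can be iterated: `n` steps cost a factor `e ^ (2 r n)`
in the derivative. Trading part of the exponent `s` for `Df ≥ β` gives
`P(s, F) ≤ P(u, G) + 2 r u - (s - u) log β` whenever `0 ≤ u ≤ s`. The bounds for the pressures are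
the case `s = u`, and those for the critical exponents the case `s = (1 + 2 r / log β) u`.
-/

section RealInequalities

theorem rpow_neg_le_exp_mul_rpow_neg {a b c β s u : ℝ} (hβ : 0 < β) (ha : β ≤ a) (hb : 0 < b)
    (hc : Real.log (b / a) ≤ c) (hu : 0 ≤ u) (hus : u ≤ s) :
    a ^ (-s) ≤ Real.exp (c * u - (s - u) * Real.log β) * b ^ (-u) := by
  have ha0 : 0 < a := hβ.trans_le ha
  have hlogβ : Real.log β ≤ Real.log a := Real.log_le_log hβ ha
  rw [Real.log_div hb.ne' ha0.ne'] at hc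
  rw [Real.rpow_def_of_pos ha0, Real.rpow_def_of_pos hb, ← Real.exp_add, Real.exp_le_exp]
  linarith [mul_le_mul_of_nonneg_right hc hu,
    mul_le_mul_of_nonneg_left hlogβ (sub_nonneg.2 hus)]

theorem inv_mul_log_le_inv_mul_log_add {a b c : ℝ} {n : ℕ} (hn : n ≠ 0) (ha : 0 < a) (hb : 0 < b)
    (h : a ≤ Real.exp (n * c) * b) :
    (n : ℝ)⁻¹ * Real.log a ≤ (n : ℝ)⁻¹ * Real.log b + c := by
  have hlog : Real.log a ≤ n * c + Real.log b := by
    simpa only [Real.log_mul (Real.exp_ne_zero _) hb.ne', Real.log_exp] using Real.log_le_log ha h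
  calc (n : ℝ)⁻¹ * Real.log a
      ≤ (n : ℝ)⁻¹ * (n * c + Real.log b) := by gcongr
    _ = (n : ℝ)⁻¹ * Real.log b + c := by
        rw [mul_add, inv_mul_cancel_left₀ (Nat.cast_ne_zero.2 hn), add_comm]

variable {ι : Type*} {l : Filter ι} [l.NeBot] {a b : ι → ℝ} {c : ℝ}

theorem liminf_coe_le_liminf_coe_add (h : ∀ᶠ i in l, a i ≤ b i + c) :
    liminf (fun i => (a i : EReal)) l ≤ liminf (fun i => (b i : EReal)) l + c :=
  calc liminf (fun i => (a i : EReal)) l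
      ≤ liminf ((fun _ => (c : EReal)) + fun i => (b i : EReal)) l :=
        liminf_le_liminf <| h.mono fun i hi => by
          rw [Pi.add_apply, add_comm, ← EReal.coe_add]
          exact EReal.coe_le_coe hi
    _ ≤ limsup (fun _ => (c : EReal)) l + liminf (fun i => (b i : EReal)) l :=
        EReal.liminf_add_le (.inl (by simp)) (.inl (by simp))
    _ = liminf (fun i => (b i : EReal)) l + c := by rw [limsup_const, add_comm]

theorem limsup_coe_le_limsup_coe_add (h : ∀ᶠ i in l, a i ≤ b i + c) :
    limsup (fun i => (a i : EReal)) l ≤ limsup (fun i => (b i : EReal)) l + c :=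
  calc limsup (fun i => (a i : EReal)) l
      ≤ limsup ((fun i => (b i : EReal)) + fun _ => (c : EReal)) l :=
        limsup_le_limsup <| h.mono fun i hi => by
          rw [Pi.add_apply, ← EReal.coe_add]
          exact EReal.coe_le_coe hi
    _ ≤ limsup (fun i => (b i : EReal)) l + limsup (fun _ => (c : EReal)) l :=
        EReal.limsup_add_le (.inr (by simp)) (.inr (by simp))
    _ = limsup (fun i => (b i : EReal)) l + c := by rw [limsup_const]

end RealInequalities

/-- The distance `d` is exceeded by an admissible scale `t ≤ Δ` of (T3) with distortion bound
`ε t ≤ r`. The case `d = 0` is listed separately because (T3) only concerns scales `t > 0`, and for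
`r = 0` none of these need be admissible. -/
def WithinDistortion (ε : ℝ → ℝ) (Δ r d : ℝ) : Prop :=
  d = 0 ∨ ∃ t ∈ Ioc 0 Δ, ε t ≤ r ∧ d < t

namespace WithinDistortion

variable {ε : ℝ → ℝ} {Δ r d : ℝ}

theorem lt_radius (h : WithinDistortion ε Δ r d) (hΔ : 0 < Δ) : d < Δ := by
  rcases h with rfl | ⟨t, ht, -, hdt⟩
  · exact hΔ
  · exact hdt.trans_le ht.2

theorem of_mul_le_add {β q d' : ℝ} (hβ : 1 ≤ β) (h : WithinDistortion ε Δ r d)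
    (hq : q ∈ Icc 0 Δ) (hεq : ε q ≤ r) (hd' : 0 ≤ d') (hle : β * d' ≤ d + (β - 1) * q) :
    WithinDistortion ε Δ r d' := by
  rcases h with rfl | ⟨t, ht, hεt, hdt⟩
  · rcases hq.1.eq_or_lt with rfl | hq0
    · exact .inl (by nlinarith)
    · exact .inr ⟨q, ⟨hq0, hq.2⟩, hεq, by nlinarith⟩
  · rcases le_total q t with hqt | htq
    · exact .inr ⟨t, ht, hεt, by nlinarith⟩
    · exact .inr ⟨q, ⟨ht.1.trans_le htq, hq.2⟩, hεq, by nlinarith⟩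

end WithinDistortion

namespace ConfCover

variable {K : Type*} [MetricSpace K] {Δ β : ℝ} {ε : ℝ → ℝ}

section SingleMap

variable (f : ConfCover K Δ β ε) {x u y y' : K}

theorem δf_pos (hx : x ∈ f.dom) : 0 < f.δf x := f.δ0_pos.trans_le (f.δf_mem x hx).1

theorem radius_pos (hx : x ∈ f.dom) : 0 < Δ := (f.δf_pos hx).trans_le (f.δf_mem x hx).2

theorem Df_mem_Icc (hx : x ∈ f.dom) : f.Df x ∈ Icc β f.lam1 := by
  simpa [divq] using f.t2 x hx x hx (by simpa using f.δf_pos hx)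

theorem lam1_pos [Nonempty K] : 0 < f.lam1 := by
  obtain ⟨x, hx, -⟩ := f.surj (Classical.arbitrary K)
  exact (f.Df_pos x hx).trans_le (f.Df_mem_Icc hx).2

theorem mul_dist_le_dist_image (hx : x ∈ f.dom) (hu : u ∈ f.dom) (hux : dist u x < f.δf x) :
    β * dist u x ≤ dist (f.toFun u) (f.toFun x) := by
  rcases eq_or_ne u x with rfl | hne
  · simp
  · have hquot := (f.t2 x hx u hu hux).1
    rwa [divq, if_neg hne, le_div_iff₀ (dist_pos.2 hne)] at hquot

theorem abs_log_Df_div_le_of_dist_lt (hx : x ∈ f.dom) (hu : u ∈ f.dom)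
    (hux : dist u x < f.δf x) {t : ℝ} (ht : t ∈ Ioc 0 Δ)
    (hdist : dist (f.toFun u) (f.toFun x) < t) :
    |Real.log (f.Df x / f.Df u)| ≤ ε t := by
  have hdistortion := f.t3 x hx t ht.1 ht.2
    x ⟨⟨mem_ball_self (f.δf_pos hx), hx⟩, mem_ball_self ht.1⟩ u ⟨⟨hux, hu⟩, hdist⟩
  rwa [divq, if_pos rfl] at hdistortion

theorem abs_log_Df_div_le (hβ : 0 < β) (hx : x ∈ f.dom) (hu : u ∈ f.dom)
    (hux : dist u x < f.δf x) {r : ℝ} (hr : 0 ≤ r)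
    (h : WithinDistortion ε Δ r (dist (f.toFun u) (f.toFun x))) :
    |Real.log (f.Df x / f.Df u)| ≤ r := by
  rcases h with h0 | ⟨t, ht, hεt, hdt⟩
  · have hdist : β * dist u x ≤ 0 := h0 ▸ f.mul_dist_le_dist_image hx hu hux
    have hux' : u = x := dist_le_zero.1 (nonpos_of_mul_nonpos_right hdist hβ)
    rwa [hux', div_self (f.Df_pos x hx).ne', Real.log_one, abs_zero]
  · exact (f.abs_log_Df_div_le_of_dist_lt hx hu hux ht hdt).trans hεt

instance finite_fiber (y : K) : Finite (f.fiber y) := f.fiber_finite y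

theorem exists_fiber_embedding_of_dist_lt (h : dist y y' < Δ) :
    ∃ L : f.fiber y ↪ f.fiber y', ∀ x, dist (L x : K) x < f.δf x := by
  have hlift (x : f.fiber y) : ∃ z : f.fiber y', dist (z : K) x < f.δf x := by
    have hy' : y' ∈ ball (f.toFun x) Δ := by rwa [x.2.2, mem_ball']
    obtain ⟨z, ⟨hzx, hz⟩, hzy'⟩ := f.t1 x x.2.1 hy'
    exact ⟨⟨z, hz, hzy'⟩, hzx⟩
  choose L hL using hlift
  refine ⟨⟨L, fun x x' hLx => Subtype.ext ?_⟩, hL⟩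
  by_contra hne
  have hdisj := f.t0 x x.2.1 x' x'.2.1 hne (x.2.2.trans x'.2.2.symm)
  exact disjoint_left.1 hdisj (hL x) (hLx ▸ hL x')

end SingleMap

/-- Corresponding fibers of `f` and `g` are matched by bijections moving points by at most
`(1 - β⁻¹) q` for some `q ≤ Δ` with `ε q ≤ r`, and changing the derivative by a factor of at most
`e ^ r`. This is what the bound `d_ℰ(f, g) ≤ r ≤ ε Δ` provides. -/
def FibersClose (f g : ConfCover K Δ β ε) (r : ℝ) : Prop :=
  ∀ y, ∃ π : f.fiber y ≃ g.fiber y, ∀ x : f.fiber y,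
    (∃ q ∈ Icc 0 Δ, ε q ≤ r ∧ β * dist (x : K) (π x) ≤ (β - 1) * q) ∧
      |Real.log (g.Df (π x) / f.Df x)| ≤ r

variable {f g : ConfCover K Δ β ε} {r : ℝ}

theorem exists_fiber_equiv_of_dE_le (hr : 0 ≤ r) (h : dE f g ≤ ENNReal.ofReal r) (y : K) :
    ∃ π : f.fiber y ≃ g.fiber y, ∀ x : f.fiber y,
      ε (β / (β - 1) * dist (x : K) (π x)) + |Real.log (g.Df (π x) / f.Df x)| ≤ r := by
  have hy := iSup_le_iff.1 h y
  rcases isEmpty_or_nonempty (f.fiber y ≃ g.fiber y) with hempty | hnonempty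
  · rw [iInf_of_empty, top_le_iff] at hy
    exact absurd hy ENNReal.ofReal_ne_top
  · obtain ⟨π, hπ⟩ := exists_eq_ciInf_of_finite
      (f := fun π : f.fiber y ≃ g.fiber y => ⨆ x : f.fiber y, ENNReal.ofReal
        (ε (β / (β - 1) * dist (x : K) (π x)) + |Real.log (g.Df (π x) / f.Df x)|))
    rw [← hπ] at hy
    exact ⟨π, fun x => (ENNReal.ofReal_le_ofReal_iff hr).1 (iSup_le_iff.1 hy x)⟩

theorem fibersClose_of_dE_le (hβ : 1 < β) (hεmono : StrictMonoOn ε (Ici 0))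
    (hεnn : ∀ t, 0 ≤ t → 0 ≤ ε t) (hr : 0 ≤ r) (hrε : r ≤ ε Δ)
    (h : dE f g ≤ ENNReal.ofReal r) : FibersClose f g r := by
  intro y
  obtain ⟨π, hπ⟩ := exists_fiber_equiv_of_dE_le hr h y
  refine ⟨π, fun x => ?_⟩
  have hβ' : 0 < β - 1 := sub_pos.2 hβ
  set q := β / (β - 1) * dist (x : K) (π x) with hq
  have hq0 : 0 ≤ q := by positivity
  have hεq : ε q ≤ r := (le_add_of_nonneg_right (abs_nonneg _)).trans (hπ x)
  have hqΔ : q ≤ Δ := (hεmono.le_iff_le hq0 (f.radius_pos x.2.1).le).1 (hεq.trans hrε)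
  have hdist : β * dist (x : K) (π x) = (β - 1) * q := by rw [hq]; field_simp
  exact ⟨⟨q, ⟨hq0, hqΔ⟩, hεq, hdist.le⟩, (le_add_of_nonneg_left (hεnn q hq0)).trans (hπ x)⟩

theorem FibersClose.symm (h : FibersClose f g r) : FibersClose g f r := by
  intro y
  obtain ⟨π, hπ⟩ := h y
  refine ⟨π.symm, fun x => ?_⟩
  have hx := hπ (π.symm x)
  rwa [Equiv.apply_symm_apply, dist_comm, ← abs_neg, ← Real.log_inv, inv_div] at hx

theorem FibersClose.exists_fiber_embedding (hβ : 1 ≤ β) (h : FibersClose f g r) {y y' : K}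
    (hy : WithinDistortion ε Δ r (dist y y')) :
    ∃ ψ : f.fiber y ↪ g.fiber y', ∀ x : f.fiber y,
      WithinDistortion ε Δ r (dist (x : K) (ψ x)) ∧ |Real.log (g.Df (ψ x) / f.Df x)| ≤ 2 * r := by
  have hβ0 : 0 < β := one_pos.trans_le hβ
  obtain ⟨z, hz, -⟩ := f.surj y
  obtain ⟨L, hL⟩ := f.exists_fiber_embedding_of_dist_lt (hy.lt_radius (f.radius_pos hz))
  obtain ⟨π, hπ⟩ := h y'
  refine ⟨L.trans π.toEmbedding, fun x => ?_⟩
  obtain ⟨⟨q, hq, hεq, hdistπ⟩, hlogπ⟩ := hπ (L x)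
  have himage : dist (f.toFun (L x)) (f.toFun x) = dist y y' := by
    rw [(L x).2.2, x.2.2, dist_comm]
  have hdistL := f.mul_dist_le_dist_image x.2.1 (L x).2.1 (hL x)
  have hlogL := f.abs_log_Df_div_le hβ0 x.2.1 (L x).2.1 (hL x) ((abs_nonneg _).trans hlogπ)
    (himage.symm ▸ hy)
  refine ⟨hy.of_mul_le_add hβ hq hεq dist_nonneg ?_, ?_⟩
  · calc β * dist (x : K) (π (L x))
        ≤ β * (dist (x : K) (L x) + dist (L x : K) (π (L x))) := by
          gcongr; exact dist_triangle _ _ _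
      _ ≤ dist y y' + (β - 1) * q := by rw [dist_comm (x : K)]; linarith
  · have hfx := (f.Df_pos x x.2.1).ne'
    have hfL := (f.Df_pos (L x) (L x).2.1).ne'
    have hg := (g.Df_pos (π (L x)) (π (L x)).2.1).ne'
    calc |Real.log (g.Df (π (L x)) / f.Df x)|
        = |Real.log (g.Df (π (L x)) / f.Df (L x)) - Real.log (f.Df x / f.Df (L x))| := by
          rw [Real.log_div hg hfL, Real.log_div hfx hfL, Real.log_div hg hfx,
            sub_sub_sub_cancel_right]
      _ ≤ r + r := (abs_sub _ _).trans (add_le_add hlogπ hlogL)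
      _ = 2 * r := (two_mul r).symm

end ConfCover

section Sequences

variable {K : Type*} [MetricSpace K] {Δ β : ℝ} {ε : ℝ → ℝ} (F : ℕ → ConfCover K Δ β ε)

/-- The partition sum `Σ_{f^{(n)} x = y} (Df^{(n)}_x)^{-s}`, whose extrema over `y` are
`M_n(s)` and `m_n(s)`. -/
def partitionSum (s : ℝ) (n : ℕ) (y : K) : ℝ :=
  ∑' x : preimages F n y, iterDeriv F n (x : K) ^ (-s)

theorem preimages_zero (y : K) : preimages F 0 y = {y} := by
  ext x
  simp [preimages, domFrom, iterFrom]

theorem mem_preimages_succ_iff {n : ℕ} {x y : K} :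
    x ∈ preimages F (n + 1) y ↔
      iterFrom F 0 n x ∈ (F n).fiber y ∧ x ∈ preimages F n (iterFrom F 0 n x) := by
  simp only [preimages, domFrom, ConfCover.fiber, iterFrom, Nat.forall_lt_succ_right, mem_ofPred_eq,
    mem_inter_iff, mem_preimage, mem_singleton_iff, Function.comp_apply, zero_add]
  tauto

/-- The decomposition of the preimages of `y` under `f^{(n+1)}` according to their images under
`f^{(n)}`. -/
def preimagesSuccEquiv (n : ℕ) (y : K) :
    preimages F (n + 1) y ≃ Σ z : (F n).fiber y, preimages F n (z : K) where
  toFun x :=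
    ⟨⟨iterFrom F 0 n x, ((mem_preimages_succ_iff F).1 x.2).1⟩,
      ⟨x, ((mem_preimages_succ_iff F).1 x.2).2⟩⟩
  invFun p := ⟨p.2, (mem_preimages_succ_iff F).2 <| by
    rw [p.2.2.2]
    exact ⟨p.1.2, p.2.2⟩⟩
  left_inv _ := rfl
  right_inv := by
    rintro ⟨⟨z, hz⟩, x, hx, hxz⟩
    cases hxz
    rfl

instance finite_preimages (n : ℕ) (y : K) : Finite (preimages F n y) := by
  induction n generalizing y with
  | zero => rw [preimages_zero]; infer_instance
  | succ n ih => exact Finite.of_equiv _ (preimagesSuccEquiv F n y).symm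

variable {F}

theorem iterDeriv_nonneg {n : ℕ} {x y : K} (hx : x ∈ preimages F n y) : 0 ≤ iterDeriv F n x :=
  Finset.prod_nonneg fun k hk => ((F k).Df_pos _ <| by
    simpa only [zero_add] using hx.1 k (Finset.mem_range.1 hk)).le

variable {s : ℝ} {n : ℕ}

theorem partitionSum_nonneg (y : K) : 0 ≤ partitionSum F s n y :=
  tsum_nonneg fun x => Real.rpow_nonneg (iterDeriv_nonneg x.2) _

theorem partitionSum_zero (y : K) : partitionSum F s 0 y = 1 := by
  simp [partitionSum, preimages_zero, iterDeriv]

theorem iterDeriv_succ (x : K) :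
    iterDeriv F (n + 1) x = iterDeriv F n x * (F n).Df (iterFrom F 0 n x) :=
  Finset.prod_range_succ _ _

theorem partitionSum_succ (y : K) :
    partitionSum F s (n + 1) y =
      ∑' z : (F n).fiber y, (F n).Df z ^ (-s) * partitionSum F s n z := by
  have hterm (z : (F n).fiber y) (x : preimages F n (z : K)) :
      iterDeriv F (n + 1) (x : K) ^ (-s) = (F n).Df z ^ (-s) * iterDeriv F n (x : K) ^ (-s) := by
    rw [iterDeriv_succ, x.2.2, mul_comm,
      Real.mul_rpow ((F n).Df_pos _ z.2.1).le (iterDeriv_nonneg x.2)]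
  calc partitionSum F s (n + 1) y
      = ∑' p : Σ z : (F n).fiber y, preimages F n (z : K),
          iterDeriv F (n + 1) (p.2 : K) ^ (-s) :=
        ((preimagesSuccEquiv F n y).symm.tsum_eq fun x => iterDeriv F (n + 1) (x : K) ^ (-s)).symm
    _ = ∑' z : (F n).fiber y, ∑' x : preimages F n (z : K),
          iterDeriv F (n + 1) (x : K) ^ (-s) :=
        Summable.tsum_sigma .of_finite
    _ = _ := by simp only [hterm, tsum_mul_left, partitionSum]

theorem partitionSum_le_prod_degBound (hβ : 1 ≤ β) (hs : 0 ≤ s) (y : K) :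
    partitionSum F s n y ≤ ∏ k ∈ Finset.range n, ((F k).degBound : ℝ) := by
  induction n generalizing y with
  | zero => simp [partitionSum_zero]
  | succ n ih =>
    have hterm (z : (F n).fiber y) : (F n).Df z ^ (-s) * partitionSum F s n z ≤
        ∏ k ∈ Finset.range n, ((F k).degBound : ℝ) :=
      (mul_le_of_le_one_left (partitionSum_nonneg _) <|
        Real.rpow_le_one_of_one_le_of_nonpos (hβ.trans ((F n).Df_mem_Icc z.2.1).1)
          (neg_nonpos.2 hs)).trans (ih z)
    rw [partitionSum_succ, Finset.prod_range_succ]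
    calc ∑' z : (F n).fiber y, (F n).Df z ^ (-s) * partitionSum F s n z
        ≤ ∑' _ : (F n).fiber y, ∏ k ∈ Finset.range n, ((F k).degBound : ℝ) :=
          Summable.tsum_le_tsum hterm .of_finite .of_finite
      _ = ((F n).fiber y).ncard * ∏ k ∈ Finset.range n, ((F k).degBound : ℝ) := by
          rw [tsum_const, nsmul_eq_mul, Nat.card_coe_set_eq]
      _ ≤ (∏ k ∈ Finset.range n, ((F k).degBound : ℝ)) * (F n).degBound := by
          rw [mul_comm]
          gcongr
          exact (F n).fiber_card y

theorem prod_lam1_rpow_neg_le_partitionSum [Nonempty K] (hs : 0 ≤ s) (y : K) :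
    ∏ k ∈ Finset.range n, (F k).lam1 ^ (-s) ≤ partitionSum F s n y := by
  induction n generalizing y with
  | zero => simp [partitionSum_zero]
  | succ n ih =>
    obtain ⟨z, hz⟩ := (F n).surj y
    rw [partitionSum_succ, Finset.prod_range_succ, mul_comm]
    calc (F n).lam1 ^ (-s) * ∏ k ∈ Finset.range n, (F k).lam1 ^ (-s)
        ≤ (F n).Df z ^ (-s) * partitionSum F s n z :=
          mul_le_mul (Real.rpow_le_rpow_of_nonpos ((F n).Df_pos z hz.1) ((F n).Df_mem_Icc hz.1).2
            (neg_nonpos.2 hs)) (ih z)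
            (Finset.prod_nonneg fun k _ => Real.rpow_nonneg (F k).lam1_pos.le _)
            (Real.rpow_nonneg ((F n).Df_pos z hz.1).le _)
      _ ≤ ∑' z : (F n).fiber y, (F n).Df z ^ (-s) * partitionSum F s n z :=
          Summable.le_tsum (f := fun z : (F n).fiber y => (F n).Df z ^ (-s) * partitionSum F s n z)
            .of_finite ⟨z, hz⟩ fun w _ =>
              mul_nonneg (Real.rpow_nonneg ((F n).Df_pos w w.2.1).le _) (partitionSum_nonneg _)

theorem bddAbove_range_partitionSum (hβ : 1 ≤ β) (hs : 0 ≤ s) :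
    BddAbove (range (partitionSum F s n)) :=
  ⟨_, forall_mem_range.2 (partitionSum_le_prod_degBound hβ hs)⟩

theorem bddBelow_range_partitionSum : BddBelow (range (partitionSum F s n)) :=
  ⟨0, forall_mem_range.2 partitionSum_nonneg⟩

theorem mseq_pos [Nonempty K] (hs : 0 ≤ s) : 0 < mseq F s n :=
  (Finset.prod_pos fun k _ => Real.rpow_pos_of_pos (F k).lam1_pos _).trans_le <|
    le_ciInf (prod_lam1_rpow_neg_le_partitionSum hs)

theorem mseq_le_Mseq [Nonempty K] (hβ : 1 ≤ β) (hs : 0 ≤ s) : mseq F s n ≤ Mseq F s n :=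
  ciInf_le_ciSup bddBelow_range_partitionSum (bddAbove_range_partitionSum hβ hs)

variable {G : ℕ → ConfCover K Δ β ε} {r u : ℝ}

theorem partitionSum_le_exp_pow_mul_partitionSum (hβ : 1 ≤ β)
    (hFG : ∀ n, (F n).FibersClose (G n) r) (hu : 0 ≤ u) (hus : u ≤ s) {y y' : K}
    (hy : WithinDistortion ε Δ r (dist y y')) :
    partitionSum F s n y ≤
      Real.exp (2 * r * u - (s - u) * Real.log β) ^ n * partitionSum G u n y' := by
  set C := Real.exp (2 * r * u - (s - u) * Real.log β)
  induction n generalizing y y' with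
  | zero => simp [partitionSum_zero]
  | succ n ih =>
    obtain ⟨ψ, hψ⟩ := (hFG n).exists_fiber_embedding hβ hy
    have hDf (z : (F n).fiber y) : (F n).Df z ^ (-s) ≤ C * (G n).Df (ψ z) ^ (-u) :=
      rpow_neg_le_exp_mul_rpow_neg (one_pos.trans_le hβ) ((F n).Df_mem_Icc z.2.1).1
        ((G n).Df_pos _ (ψ z).2.1) (le_of_abs_le (hψ z).2) hu hus
    have hterm_nonneg (w : (G n).fiber y') :
        0 ≤ C ^ (n + 1) * ((G n).Df w ^ (-u) * partitionSum G u n w) :=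
      mul_nonneg (by positivity) <|
        mul_nonneg (Real.rpow_nonneg ((G n).Df_pos w w.2.1).le _) (partitionSum_nonneg _)
    have hterm (z : (F n).fiber y) : (F n).Df z ^ (-s) * partitionSum F s n z ≤
        C ^ (n + 1) * ((G n).Df (ψ z) ^ (-u) * partitionSum G u n (ψ z)) :=
      calc (F n).Df z ^ (-s) * partitionSum F s n z
          ≤ C * (G n).Df (ψ z) ^ (-u) * (C ^ n * partitionSum G u n (ψ z)) :=
            mul_le_mul (hDf z) (ih (hψ z).1) (partitionSum_nonneg _)
              ((Real.rpow_nonneg ((F n).Df_pos z z.2.1).le _).trans (hDf z))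
        _ = _ := by ring
    rw [partitionSum_succ, partitionSum_succ, ← tsum_mul_left]
    exact Summable.tsum_le_tsum_of_inj ψ ψ.injective (fun w _ => hterm_nonneg w) hterm
      .of_finite .of_finite

theorem mseq_le_mul_mseq {C : ℝ} (hC : 0 ≤ C)
    (h : ∀ y, partitionSum F s n y ≤ C * partitionSum G u n y) :
    mseq F s n ≤ C * mseq G u n := by
  refine le_of_le_of_eq ?_ (Real.mul_iInf_of_nonneg hC (partitionSum G u n)).symm
  exact ciInf_mono bddBelow_range_partitionSum h

theorem Mseq_le_mul_Mseq (hβ : 1 ≤ β) (hu : 0 ≤ u) {C : ℝ} (hC : 0 ≤ C)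
    (h : ∀ y, partitionSum F s n y ≤ C * partitionSum G u n y) :
    Mseq F s n ≤ C * Mseq G u n := by
  refine le_of_le_of_eq ?_ (Real.mul_iSup_of_nonneg hC (partitionSum G u n)).symm
  exact ciSup_mono
    ((bddAbove_range_partitionSum hβ hu).range_comp_left (monotone_mul_left_of_nonneg hC)) h

theorem pressure_le_pressure_add [Nonempty K] (hβ : 1 ≤ β)
    (hFG : ∀ n, (F n).FibersClose (G n) r) (hu : 0 ≤ u) (hus : u ≤ s) :
    lowPressure F s ≤ lowPressure G u + ((2 * r * u - (s - u) * Real.log β : ℝ) : EReal) ∧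
      upPressure F s ≤ upPressure G u + ((2 * r * u - (s - u) * Real.log β : ℝ) : EReal) := by
  have hs := hu.trans hus
  have hsum (n : ℕ) (y : K) : partitionSum F s n y ≤
      Real.exp (n * (2 * r * u - (s - u) * Real.log β)) * partitionSum G u n y := by
    rw [Real.exp_nat_mul]
    exact partitionSum_le_exp_pow_mul_partitionSum hβ hFG hu hus (.inl (dist_self y))
  constructor
  · refine liminf_coe_le_liminf_coe_add <| (eventually_ne_atTop 0).mono fun n hn => ?_
    exact inv_mul_log_le_inv_mul_log_add hn (mseq_pos hs) (mseq_pos hu)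
      (mseq_le_mul_mseq (Real.exp_nonneg _) (hsum n))
  · refine limsup_coe_le_limsup_coe_add <| (eventually_ne_atTop 0).mono fun n hn => ?_
    exact inv_mul_log_le_inv_mul_log_add hn
      ((mseq_pos hs).trans_le (mseq_le_Mseq hβ hs)) ((mseq_pos hu).trans_le (mseq_le_Mseq hβ hu))
      (Mseq_le_mul_Mseq hβ hu (Real.exp_nonneg _) (hsum n))

theorem pressure_le_pressure_add_two_mul [Nonempty K] (hβ : 1 ≤ β)
    (hFG : ∀ n, (F n).FibersClose (G n) r) (hs : 0 ≤ s) :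
    lowPressure F s ≤ lowPressure G s + ((2 * r * s : ℝ) : EReal) ∧
      upPressure F s ≤ upPressure G s + ((2 * r * s : ℝ) : EReal) := by
  simpa only [sub_self, zero_mul, sub_zero] using pressure_le_pressure_add hβ hFG hs le_rfl

theorem pressure_mul_le_pressure [Nonempty K] (hβ : 1 < β) (hr : 0 ≤ r)
    (hFG : ∀ n, (F n).FibersClose (G n) r) (hu : 0 ≤ u) :
    lowPressure F ((1 + 2 * r / Real.log β) * u) ≤ lowPressure G u ∧
      upPressure F ((1 + 2 * r / Real.log β) * u) ≤ upPressure G u := by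
  have hlog : 0 < Real.log β := Real.log_pos hβ
  have hle : u ≤ (1 + 2 * r / Real.log β) * u :=
    le_mul_of_one_le_left hu (le_add_of_nonneg_right (by positivity))
  have hcancel : 2 * r * u - ((1 + 2 * r / Real.log β) * u - u) * Real.log β = 0 := by
    field_simp
    ring
  simpa only [hcancel, EReal.coe_zero, add_zero] using pressure_le_pressure_add hβ.le hFG hu hle

theorem scritLow_le_mul_scritLow {c : ℝ} (hc : 0 < c)
    (h : ∀ u, 0 ≤ u → lowPressure F (c * u) ≤ lowPressure G u) :
    scritLow F ≤ ENNReal.ofReal c * scritLow G := by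
  refine sSup_le ?_
  rintro _ ⟨s, hs, rfl, hpos⟩
  have hsc : 0 ≤ s / c := by positivity
  have hcs : c * (s / c) = s := mul_div_cancel₀ s hc.ne'
  calc ENNReal.ofReal s = ENNReal.ofReal c * ENNReal.ofReal (s / c) := by
        rw [← ENNReal.ofReal_mul hc.le, hcs]
    _ ≤ ENNReal.ofReal c * scritLow G := by
        gcongr
        refine le_sSup ⟨s / c, hsc, rfl, hpos.trans_le ?_⟩
        simpa only [hcs] using h (s / c) hsc

theorem scritUp_le_mul_scritUp {c : ℝ} (hc : 0 < c)
    (h : ∀ u, 0 ≤ u → upPressure F (c * u) ≤ upPressure G u) :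
    scritUp F ≤ ENNReal.ofReal c * scritUp G := by
  have hc_ne : ENNReal.ofReal c ≠ 0 := (ENNReal.ofReal_pos.2 hc).ne'
  rw [← ENNReal.div_le_iff' hc_ne ENNReal.ofReal_ne_top]
  refine le_sInf ?_
  rintro _ ⟨u, hu, rfl, hneg⟩
  rw [ENNReal.div_le_iff' hc_ne ENNReal.ofReal_ne_top, ← ENNReal.ofReal_mul hc.le]
  exact sInf_le ⟨c * u, by positivity, rfl, (h u hu).trans_lt hneg⟩

theorem scrit_le_mul_scrit [Nonempty K] (hβ : 1 < β) (hr : 0 ≤ r)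
    (hFG : ∀ n, (F n).FibersClose (G n) r) :
    scritLow F ≤ ENNReal.ofReal (1 + 2 * r / Real.log β) * scritLow G ∧
      scritUp F ≤ ENNReal.ofReal (1 + 2 * r / Real.log β) * scritUp G := by
  have hlog : 0 < Real.log β := Real.log_pos hβ
  have hc : 0 < 1 + 2 * r / Real.log β := by positivity
  exact ⟨scritLow_le_mul_scritLow hc fun u hu => (pressure_mul_le_pressure hβ hr hFG hu).1,
    scritUp_le_mul_scritUp hc fun u hu => (pressure_mul_le_pressure hβ hr hFG hu).2⟩

end Sequences

theorem pressure_parameter_dependence_general {K : Type*} [MetricSpace K] [Nonempty K]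
    {Δ β : ℝ} {ε : ℝ → ℝ} (hβ : 1 < β) (hεmono : StrictMonoOn ε (Set.Ici 0))
    (hεnn : ∀ r : ℝ, 0 ≤ r → 0 ≤ ε r)
    (F G : ℕ → ConfCover K Δ β ε)
    (r : ℝ) (hr0 : 0 ≤ r) (hrε : r ≤ ε Δ)
    (hd : ∀ n : ℕ, dE (F n) (G n) ≤ ENNReal.ofReal r) :
    (∀ s : ℝ, 0 ≤ s →
      (lowPressure F s ≤ lowPressure G s + ((2 * r * s : ℝ) : EReal) ∧
        lowPressure G s ≤ lowPressure F s + ((2 * r * s : ℝ) : EReal)) ∧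
      (upPressure F s ≤ upPressure G s + ((2 * r * s : ℝ) : EReal) ∧
        upPressure G s ≤ upPressure F s + ((2 * r * s : ℝ) : EReal))) ∧
    (scritLow F ≤ ENNReal.ofReal (1 + 2 * r / Real.log β) * scritLow G ∧
      scritLow G ≤ ENNReal.ofReal (1 + 2 * r / Real.log β) * scritLow F) ∧
    (scritUp F ≤ ENNReal.ofReal (1 + 2 * r / Real.log β) * scritUp G ∧
      scritUp G ≤ ENNReal.ofReal (1 + 2 * r / Real.log β) * scritUp F) := by
  have hFG (n : ℕ) : (F n).FibersClose (G n) r :=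
    ConfCover.fibersClose_of_dE_le hβ hεmono hεnn hr0 hrε (hd n)
  have hGF (n : ℕ) : (G n).FibersClose (F n) r := (hFG n).symm
  obtain ⟨hlowFG, hupFG⟩ := scrit_le_mul_scrit hβ hr0 hFG
  obtain ⟨hlowGF, hupGF⟩ := scrit_le_mul_scrit hβ hr0 hGF
  refine ⟨fun s hs => ?_, ⟨hlowFG, hlowGF⟩, hupFG, hupGF⟩
  obtain ⟨hPlowFG, hPupFG⟩ := pressure_le_pressure_add_two_mul hβ.le hFG hs
  obtain ⟨hPlowGF, hPupGF⟩ := pressure_le_pressure_add_two_mul hβ.le hGF hs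
  exact ⟨⟨hPlowFG, hPlowGF⟩, hPupFG, hPupGF⟩

/-- **Parameter dependence of the pressure.** If `d_∞(F,F̃) ≤ r ≤ ε(Δ)` then
`|P̲(s,F) − P̲(s,F̃)| ≤ 2rs` for `s ≥ 0`, and the critical exponents satisfy
`(1 + 2r/log β)⁻¹ ≤ s̲_crit(F)/s̲_crit(F̃) ≤ 1 + 2r/log β` (stated multiplicatively);
the same bounds hold for `P̄` and `s̄_crit`. -/
theorem pressure_parameter_dependence {K : Type*} [MetricSpace K] [CompleteSpace K] [Nonempty K]
    {Δ β : ℝ} {ε : ℝ → ℝ}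
    (hpt : ∀ x : K, (𝓝[≠] x).NeBot)
    (hΔ : 0 < Δ) (hβ : 1 < β)
    (hcov : FiniteCover K Δ) (hhom : Homogeneous K Δ)
    (hε0 : ε 0 = 0)
    (hεmono : StrictMonoOn ε (Set.Ici 0))
    (hεconc : ConcaveOn ℝ (Set.Ici 0) ε)
    (hεnn : ∀ r : ℝ, 0 ≤ r → 0 ≤ ε r)
    (F G : ℕ → ConfCover K Δ β ε)
    (r : ℝ) (hr0 : 0 ≤ r) (hrε : r ≤ ε Δ)
    (hd : ∀ n : ℕ, dE (F n) (G n) ≤ ENNReal.ofReal r) :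
    (∀ s : ℝ, 0 ≤ s →
      (lowPressure F s ≤ lowPressure G s + ((2 * r * s : ℝ) : EReal) ∧
        lowPressure G s ≤ lowPressure F s + ((2 * r * s : ℝ) : EReal)) ∧
      (upPressure F s ≤ upPressure G s + ((2 * r * s : ℝ) : EReal) ∧
        upPressure G s ≤ upPressure F s + ((2 * r * s : ℝ) : EReal))) ∧
    (scritLow F ≤ ENNReal.ofReal (1 + 2 * r / Real.log β) * scritLow G ∧
      scritLow G ≤ ENNReal.ofReal (1 + 2 * r / Real.log β) * scritLow F) ∧
    (scritUp F ≤ ENNReal.ofReal (1 + 2 * r / Real.log β) * scritUp G ∧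
      scritUp G ≤ ENNReal.ofReal (1 + 2 * r / Real.log β) * scritUp F) := by
  exact pressure_parameter_dependence_general hβ hεmono hεnn F G r hr0 hrε hd

end
end
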